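/- arXiv:math/0504068 — 3 statements merged into one kernel-verified Lean document; each statement's English description precedes it below -/
import Mathlib

section
/- Let R be a right noetherian, left P-injective ring in which every nonzero complement left ideal is not small. Then R is right artinian. -/
open MulOpposite in
/-- Right ideals of `R`, as submodules of `R` over `Rᵐᵒᵖ`. -/
abbrev RIdeal (R : Type*) [Ring R] := Submodule Rᵐᵒᵖ R

section Defs
variable (R : Type*) [Ring R]

/-- Left annihilator of a subset. -/
def lAnn (X : Set R) : Set R := {a | ∀ x ∈ X, a * x = 0}

/-- Right annihilator of a subset. -/
def rAnn (X : Set R) : Set R := {a | ∀ x ∈ X, x * a = 0}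

/-- Right annihilator of a subset, as a right ideal. -/
def rAnnI (X : Set R) : RIdeal R where
  carrier := rAnn R X
  add_mem' := by intro a b ha hb x hx; rw [mul_add, ha x hx, hb x hx, add_zero]
  zero_mem' := by intro x hx; rw [mul_zero]
  smul_mem' := by
    intro c a ha x hx
    show x * (a * c.unop) = 0
    rw [← mul_assoc, ha x hx, zero_mul]

/-- `R` is left P-injective: `rl(a) = aR` for every `a`. -/
def IsLeftPInjective : Prop :=
  ∀ a x : R, (∀ u : R, u * a = 0 → u * x = 0) ↔ ∃ s : R, x = a * s

/-- `R` is left 2-injective. -/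
def IsLeft2Injective : Prop :=
  ∀ (a b : R) (f : ↥(Submodule.span R ({a, b} : Set R)) →ₗ[R] R),
    ∃ g : R →ₗ[R] R, ∀ x : ↥(Submodule.span R ({a, b} : Set R)), g (x : R) = f x

/-- `R` is left FP-injective: every matrix ring over `R` is left P-injective. -/
def IsLeftFPInjective : Prop :=
  ∀ n : ℕ, IsLeftPInjective (Matrix (Fin n) (Fin n) R)

/-- A left ideal is small if `K + I = R` implies `K = R`. -/
def IsSmallLeftIdeal (I : Ideal R) : Prop := ∀ K : Ideal R, K ⊔ I = ⊤ → K = ⊤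

/-- A complement left ideal: maximal with respect to intersecting some left ideal trivially. -/
def IsComplementLeftIdeal (C : Ideal R) : Prop :=
  ∃ S : Ideal R, C ⊓ S = ⊥ ∧ ∀ C' : Ideal R, C ≤ C' → C' ⊓ S = ⊥ → C' = C

/-- A right ideal is essential in `R`. -/
def IsEssentialRIdeal (I : RIdeal R) : Prop := ∀ K : RIdeal R, K ⊓ I = ⊥ → K = ⊥

/-- The right socle: the sum of all simple (minimal) right ideals. -/
def rSocle : RIdeal R := sSup {m : RIdeal R | IsSimpleModule Rᵐᵒᵖ m}

/-- The right singular ideal. -/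
def rSingular : Set R := {a | IsEssentialRIdeal R (rAnnI R {a})}

/-- ACC on right annihilators. -/
def ACCOnRightAnnihilators : Prop :=
  ∀ f : ℕ → Set R, (∀ n, ∃ X : Set R, f n = rAnn R X) → (∀ n, f n ⊆ f (n + 1)) →
    ∃ n, ∀ m, n ≤ m → f m = f n

/-- The Jacobson radical, as a set. -/
def jacobsonSet : Set R := (TwoSidedIdeal.jacobson (⊥ : TwoSidedIdeal R) : Set R)

/-- A subset is nilpotent if products of some fixed length of its elements vanish. -/
def IsNilpotentSet (J : Set R) : Prop :=
  ∃ n : ℕ, ∀ f : Fin (n + 1) → R, (∀ i, f i ∈ J) → (List.ofFn f).prod = 0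

/-- `R` is quasi-Frobenius: left noetherian and left self-injective. -/
def IsQuasiFrobenius : Prop := IsNoetherianRing R ∧ Module.Injective R R

/-- `R` is right mininjective. -/
def IsRightMininjective : Prop :=
  ∀ (I : RIdeal R), IsSimpleModule Rᵐᵒᵖ I → ∀ f : I →ₗ[Rᵐᵒᵖ] R,
    ∃ c : R, ∀ x : I, f x = c * (x : R)

/-- `R` is left mininjective. -/
def IsLeftMininjective : Prop :=
  ∀ (I : Ideal R), IsSimpleModule R I → ∀ f : I →ₗ[R] R,
    ∃ c : R, ∀ x : I, f x = (x : R) * c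

/-- `R` is right simple injective. -/
def IsRightSimpleInjective : Prop :=
  ∀ (I : RIdeal R) (f : I →ₗ[Rᵐᵒᵖ] R), IsSimpleModule Rᵐᵒᵖ (LinearMap.range f) →
    ∃ c : R, ∀ x : I, f x = c * (x : R)

/-- `R` is left CS: every left ideal is essential in a direct summand of `R`. -/
def IsLeftCS : Prop :=
  ∀ I : Ideal R, ∃ K : Ideal R, (∃ K' : Ideal R, IsCompl K K') ∧ I ≤ K ∧
    ∀ L : Ideal R, L ≤ K → L ⊓ I = ⊥ → L = ⊥

/-- `R` is left min-CS: every minimal left ideal is essential in a direct summand. -/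
def IsLeftMinCS : Prop :=
  ∀ I : Ideal R, IsSimpleModule R I → ∃ K : Ideal R, (∃ K' : Ideal R, IsCompl K K') ∧ I ≤ K ∧
    ∀ L : Ideal R, L ≤ K → L ⊓ I = ⊥ → L = ⊥

/-- `R` is right Johns: right noetherian and every right ideal is a right annihilator. -/
def IsRightJohns : Prop :=
  IsNoetherianRing Rᵐᵒᵖ ∧ ∀ I : RIdeal R, ∃ X : Set R, (I : Set R) = rAnn R X

end Defs

section MoreDefs
variable (R : Type*) [Ring R]

/-- Left annihilator of a subset, as a left ideal. -/
def lAnnI (X : Set R) : Ideal R where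
  carrier := lAnn R X
  add_mem' := by intro a b ha hb x hx; rw [add_mul, ha x hx, hb x hx, add_zero]
  zero_mem' := by intro x hx; rw [zero_mul]
  smul_mem' := by
    intro c a ha x hx
    show c * a * x = 0
    rw [mul_assoc, ha x hx, mul_zero]

/-- A left ideal is essential in `R`. -/
def IsEssentialLIdeal (I : Ideal R) : Prop := ∀ K : Ideal R, K ⊓ I = ⊥ → K = ⊥

/-- The left singular ideal `Z_l`. -/
def lSingular : Set R := {a | IsEssentialLIdeal R (lAnnI R {a})}

end MoreDefs

theorem mem_lAnnI1 {R : Type*} [Ring R] (a u : R) : u ∈ lAnnI R {a} ↔ u * a = 0 := by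
  constructor
  · intro h
    exact h a rfl
  · intro h x hx
    rw [Set.mem_singleton_iff.1 hx]
    exact h

theorem exists_max_disjoint {R : Type*} [Ring R] (I C0 : Ideal R) (h0 : C0 ⊓ I = ⊥) :
    ∃ C : Ideal R, C0 ≤ C ∧ C ⊓ I = ⊥ ∧ ∀ C' : Ideal R, C ≤ C' → C' ⊓ I = ⊥ → C' = C := by
  obtain ⟨m, hm, hmax⟩ := zorn_le_nonempty₀ {C : Ideal R | C ⊓ I = ⊥} (by
    intro c hc hchain y hy
    refine ⟨sSup c, ?_, fun z hz => le_sSup hz⟩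
    have : Disjoint (sSup c) I := by
      rw [DirectedOn.disjoint_sSup_left hchain.directedOn]
      intro b hb
      exact disjoint_iff.2 (hc hb)
    exact disjoint_iff.1 this) C0 h0
  exact ⟨m, hm, hmax.prop, fun C' h1 h2 => le_antisymm (hmax.le_of_ge h2 h1) h1⟩

theorem ess_sup_of_max {R : Type*} [Ring R] (I C : Ideal R) (hd : C ⊓ I = ⊥)
    (hm : ∀ C' : Ideal R, C ≤ C' → C' ⊓ I = ⊥ → C' = C) : IsEssentialLIdeal R (C ⊔ I) := by
  intro K hK
  have h1 : (C ⊔ K) ⊓ I = ⊥ := by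
    rw [eq_bot_iff]
    rintro x ⟨hx1, hx2⟩
    obtain ⟨c, hc, k, hk, rfl⟩ := Submodule.mem_sup.1 hx1
    have hkk : k ∈ K ⊓ (C ⊔ I) := by
      refine ⟨hk, ?_⟩
      have : k = -c + (c + k) := by abel
      rw [this]
      exact Submodule.add_mem_sup (neg_mem hc) hx2
    rw [hK] at hkk
    have hk0 : k = 0 := by simpa using hkk
    subst hk0
    rw [add_zero] at hx2 ⊢
    rw [← hd]
    exact ⟨hc, hx2⟩
  have h2 := hm _ le_sup_left h1
  have h3 : K ≤ C := by rw [← h2]; exact le_sup_right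
  rw [← hK]
  exact (inf_eq_left.2 (h3.trans le_sup_left)).symm

section Goldie
variable {Q : Type*} [Ring Q] [IsNoetherianRing Q]

theorem nil_zero (hsp : ∀ a : Q, (∀ t, a * t * a = 0) → a = 0) (x : Q)
    (hx : ∀ t, IsNilpotent (x * t)) : x = 0 := by
  by_contra hne
  obtain ⟨M, ⟨t0, h0, rfl⟩, hM⟩ := set_has_maximal_iff_noetherian.2
    (inferInstanceAs (IsNoetherian Q Q))
    {N : Ideal Q | ∃ t, x * t ≠ 0 ∧ N = lAnnI Q {x * t}} ⟨_, 1, by simpa using hne, rfl⟩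
  apply h0
  apply hsp
  intro t
  by_cases hat : x * t0 * t = 0
  · rw [hat, zero_mul]
  classical
  have hnil : ∃ n, (x * t0 * t) ^ n = 0 := by rw [mul_assoc]; exact hx _
  have hk := Nat.find_spec hnil
  have hmin := fun m => Nat.find_min hnil (m := m)
  generalize Nat.find hnil = k at hk hmin
  match k, hk, hmin with
  | 0, hk, _ =>
    exfalso
    apply hat
    have : (1 : Q) = 0 := by simpa using hk
    rw [← mul_one (x * t0 * t), this, mul_zero]
  | 1, hk, _ => exact absurd (by simpa using hk) hat
  | m + 2, hk, hmin =>
    have hne' : (x * t0 * t) ^ (m + 1) ≠ 0 := hmin (m + 1) (by omega)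
    have hform : (x * t0 * t) ^ (m + 1) = x * (t0 * t * (x * t0 * t) ^ m) := by
      rw [pow_succ']; simp only [mul_assoc]
    have hform2 : (x * t0 * t) ^ (m + 1) = x * t0 * (t * (x * t0 * t) ^ m) := by
      rw [pow_succ']; simp only [mul_assoc]
    have hle : lAnnI Q {x * t0} ≤ lAnnI Q {(x * t0 * t) ^ (m + 1)} := by
      intro u hu
      rw [mem_lAnnI1] at hu ⊢
      rw [hform2, ← mul_assoc, hu, zero_mul]
    have hnl := hM (lAnnI Q {(x * t0 * t) ^ (m + 1)}) ⟨_, hform ▸ hne', by rw [hform]⟩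
    have heq : lAnnI Q {x * t0} = lAnnI Q {(x * t0 * t) ^ (m + 1)} :=
      eq_of_le_of_not_lt hle hnl
    rw [← mem_lAnnI1, heq, mem_lAnnI1, ← pow_succ']
    exact hk

theorem pow_stab (y : Q) : ∃ n, ∀ q, q * y ^ (n + 1) * y = 0 → q * y ^ (n + 1) = 0 := by
  obtain ⟨n, hn⟩ := monotone_stabilizes_iff_noetherian.2
    (inferInstanceAs (IsNoetherian Q Q)) ⟨fun n => lAnnI Q {y ^ n}, by
      intro m n hmn u hu
      rw [mem_lAnnI1] at hu ⊢
      obtain ⟨k, rfl⟩ := Nat.exists_eq_add_of_le hmn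
      rw [pow_add, ← mul_assoc, hu, zero_mul]⟩
  refine ⟨n, fun q hq => ?_⟩
  have h1 : lAnnI Q {y ^ n} = lAnnI Q {y ^ (n + 1)} := hn _ (by omega)
  have h2 : lAnnI Q {y ^ n} = lAnnI Q {y ^ (n + 2)} := hn _ (by omega)
  rw [← mem_lAnnI1, ← h1, h2, mem_lAnnI1, pow_succ y (n + 1), ← mul_assoc]
  exact hq

theorem exists_good (hsp : ∀ a : Q, (∀ t, a * t * a = 0) → a = 0) (I : Ideal Q) (hI : I ≠ ⊥) :
    ∃ b ∈ I, b ≠ 0 ∧ ∀ q, q * b * b = 0 → q * b = 0 := by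
  obtain ⟨x, hx, hx0⟩ := Submodule.exists_mem_ne_zero_of_ne_bot hI
  have : ∃ t, ¬ IsNilpotent (x * t) := by
    by_contra! h
    exact hx0 (nil_zero hsp x h)
  obtain ⟨t, ht⟩ := this
  have ht' : ¬ IsNilpotent (t * x) := by
    rintro ⟨n, hn⟩
    apply ht
    refine ⟨n + 1, ?_⟩
    have : ∀ n, (x * t) ^ (n + 1) = x * (t * x) ^ n * t := by
      intro n
      induction n with
      | zero => simp
      | succ k ih => rw [pow_succ, ih, pow_succ]; simp only [mul_assoc]
    rw [this, hn]; simp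
  obtain ⟨n, hn⟩ := pow_stab (t * x)
  refine ⟨(t * x) ^ (n + 1), ?_, fun h => ht' ⟨_, h⟩, ?_⟩
  · rw [pow_succ]
    exact I.mul_mem_left _ (I.mul_mem_left _ hx)
  · intro q
    have : ∀ k, q * (t * x) ^ (n + 1) * (t * x) ^ k = 0 → q * (t * x) ^ (n + 1) = 0 := by
      intro k
      induction k with
      | zero => intro h; simpa using h
      | succ k ih =>
        intro h
        apply ih
        have h' := hn (q * (t * x) ^ k) (by
          rw [← h]
          simp only [mul_assoc, ← pow_succ, ← pow_add]
          congr 2; omega)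
        rw [← h']
        simp only [mul_assoc, ← pow_add]
        congr 2; omega
    exact this _

theorem exists_reg (hsp : ∀ a : Q, (∀ t, a * t * a = 0) → a = 0) (E : Ideal Q)
    (hE : IsEssentialLIdeal Q E) : ∃ a ∈ E, ∀ u, u * a = 0 → u = 0 := by
  obtain ⟨N, ⟨hNE, a, haN, ha⟩, hmax⟩ := set_has_maximal_iff_noetherian.2
    (inferInstanceAs (IsNoetherian Q Q))
    {N : Ideal Q | N ≤ E ∧ ∃ a ∈ N, ∀ u ∈ N, u * a = 0 → u = 0}
    ⟨⊥, bot_le, 0, zero_mem _, fun u hu _ => by simpa using hu⟩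
  refine ⟨a, hNE haN, ?_⟩
  suffices h : lAnnI Q {a} ⊓ E = ⊥ by
    have := hE _ h
    intro u hu
    rw [← mem_lAnnI1, this] at hu
    simpa using hu
  by_contra hne
  obtain ⟨b, ⟨hb1, hb2⟩, hb0, hb⟩ := exists_good hsp _ hne
  replace hb1 : b * a = 0 := (mem_lAnnI1 _ _).1 hb1
  apply hmax (N ⊔ Ideal.span {b})
  · refine ⟨sup_le hNE ((Ideal.span_singleton_le_iff_mem _).2 hb2), a + b,
      Submodule.add_mem_sup haN (Ideal.mem_span_singleton_self b), ?_⟩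
    intro u hu hu0
    obtain ⟨n, hn, c, hc, rfl⟩ := Submodule.mem_sup.1 hu
    obtain ⟨s, rfl⟩ := Ideal.mem_span_singleton'.1 hc
    have e1 : n * a + n * b + s * b * b = 0 := by
      rw [← hu0]
      have : s * b * a = 0 := by rw [mul_assoc, hb1, mul_zero]
      simp only [add_mul, mul_add, this]; abel
    have e2 : n * a * a = 0 := by
      have := congrArg (· * a) e1
      simpa [add_mul, mul_assoc, hb1] using this
    have e3 : n = 0 := ha n hn (ha _ (Ideal.mul_mem_left N _ haN) e2)
    subst e3
    have e4 := hb s (by simpa using e1)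
    simp [e4]
  · refine lt_of_le_of_ne le_sup_left fun h => hb0 (ha b ?_ hb1)
    rw [h]
    exact Submodule.mem_sup_right (Ideal.mem_span_singleton_self b)

theorem ess_of_reg (a : Q) (ha : ∀ u, u * a = 0 → u = 0) :
    IsEssentialLIdeal Q (Ideal.span {a}) := by
  intro K hK
  have := IsNoetherian.subsingleton_of_prod_injective (R := Q) (M := Q) (N := K)
    ((LinearMap.toSpanSingleton Q Q a).coprod K.subtype) (by
      rw [injective_iff_map_eq_zero]
      rintro ⟨q, k⟩ h
      simp only [LinearMap.coprod_apply, LinearMap.toSpanSingleton_apply, smul_eq_mul,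
        Submodule.subtype_apply] at h
      have hk : (k : Q) ∈ K ⊓ Ideal.span {a} := by
        refine ⟨k.2, Ideal.mem_span_singleton'.2 ⟨-q, ?_⟩⟩
        rw [neg_mul]
        exact neg_eq_of_add_eq_zero_right h
      rw [hK] at hk
      have hk0 : (k : Q) = 0 := by simpa using hk
      rw [hk0, add_zero] at h
      exact Prod.ext (ha q h) (Subtype.ext hk0))
  exact Submodule.subsingleton_iff_eq_bot.1 this

theorem reg_right (hsp : ∀ a : Q, (∀ t, a * t * a = 0) → a = 0)
    (a : Q) (ha : ∀ u, u * a = 0 → u = 0) (x : Q) (hx : a * x = 0) : x = 0 := by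
  apply nil_zero hsp
  intro t
  obtain ⟨n, hn⟩ := pow_stab (x * t)
  refine ⟨n + 1, ?_⟩
  have := ess_of_reg a ha (Ideal.span {(x * t) ^ (n + 1)}) (by
    rw [eq_bot_iff]
    rintro u ⟨h1, h2⟩
    obtain ⟨q, rfl⟩ := Ideal.mem_span_singleton'.1 h1
    obtain ⟨r, hr⟩ := Ideal.mem_span_singleton'.1 h2
    have := hn q (by rw [← hr, mul_assoc, ← mul_assoc a, hx]; simp)
    rw [this]; exact zero_mem _)
  simpa using this

theorem goldie_ss (hsp : ∀ a : Q, (∀ t, a * t * a = 0) → a = 0)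
    (hreg : ∀ a : Q, (∀ x, a * x = 0 → x = 0) → ∃ c, c * a = 1) : IsSemisimpleRing Q := by
  have : ComplementedLattice (Submodule Q Q) := by
    constructor
    intro I
    obtain ⟨C, -, hC, hm⟩ := exists_max_disjoint I ⊥ (by simp)
    obtain ⟨a, haE, ha⟩ := exists_reg hsp _ (ess_sup_of_max I C hC hm)
    obtain ⟨c, hc⟩ := hreg a (reg_right hsp a ha)
    refine ⟨C, disjoint_iff.2 (by rw [inf_comm]; exact hC), codisjoint_iff.2 ?_⟩
    rw [sup_comm]
    refine (Ideal.eq_top_iff_one _).2 ?_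
    rw [← hc]
    exact Ideal.mul_mem_left _ _ haE
  exact (isSemisimpleModule_iff Q Q).2 this

end Goldie

open MulOpposite

/-- Right annihilator of a two-sided ideal, as a left ideal. -/
def rightAnnIdeal {S : Type*} [Ring S] (I : Ideal S) [I.IsTwoSided] : Ideal S where
  carrier := {r | ∀ j ∈ I, j * r = 0}
  add_mem' := by intro a b ha hb x hx; rw [mul_add, ha x hx, hb x hx, add_zero]
  zero_mem' := by intro x hx; rw [mul_zero]
  smul_mem' := by
    intro c a ha x hx
    show x * (c * a) = 0
    rw [← mul_assoc]
    exact ha _ (I.mul_mem_right c hx)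

theorem ess_inf {R : Type*} [Ring R] {A B : Ideal R} (hA : IsEssentialLIdeal R A)
    (hB : IsEssentialLIdeal R B) : IsEssentialLIdeal R (A ⊓ B) := by
  intro K hK
  rw [← inf_assoc] at hK
  exact hA _ (hB _ hK)

theorem ess_mono {R : Type*} [Ring R] {A B : Ideal R} (hA : IsEssentialLIdeal R A)
    (h : A ≤ B) : IsEssentialLIdeal R B := by
  intro K hK
  refine hA _ (eq_bot_iff.2 ?_)
  rw [← hK]
  exact inf_le_inf_left _ h

theorem ess_elt {R : Type*} [Ring R] {L : Ideal R} (hL : IsEssentialLIdeal R L) (c : R)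
    (hc : c ≠ 0) : ∃ r, r * c ∈ L ∧ r * c ≠ 0 := by
  by_contra! h
  have := hL (Ideal.span {c}) (by
    rw [eq_bot_iff]
    rintro u ⟨h1, h2⟩
    obtain ⟨q, rfl⟩ := Ideal.mem_span_singleton'.1 h1
    exact (Submodule.mem_bot _).2 (h q h2))
  exact hc (by simpa using this)

theorem ess_finset {R : Type*} [Ring R] {L : Ideal R} (hL : IsEssentialLIdeal R L)
    (F : Finset R) (hF : ∃ c ∈ F, c ≠ 0) : ∃ r, (∀ c ∈ F, r * c ∈ L) ∧ ∃ c ∈ F, r * c ≠ 0 := by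
  classical
  induction F using Finset.induction_on with
  | empty => simp at hF
  | insert a F haF ih =>
    by_cases h : ∃ c ∈ F, c ≠ 0
    · obtain ⟨r, h1, c0, hc0, h2⟩ := ih h
      by_cases hra : r * a = 0
      · refine ⟨r, ?_, c0, Finset.mem_insert_of_mem hc0, h2⟩
        intro c hc
        rcases Finset.mem_insert.1 hc with rfl | hc
        · rw [hra]; exact zero_mem _
        · exact h1 c hc
      · obtain ⟨s, hs1, hs2⟩ := ess_elt hL _ hra
        refine ⟨s * r, ?_, a, Finset.mem_insert_self _ _, by rwa [mul_assoc]⟩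
        intro c hc
        rw [mul_assoc]
        rcases Finset.mem_insert.1 hc with rfl | hc
        · exact hs1
        · exact L.mul_mem_left _ (h1 c hc)
    · push Not at h
      obtain ⟨c, hc, hc0⟩ := hF
      have : c = a := by
        rcases Finset.mem_insert.1 hc with rfl | hc
        · rfl
        · exact absurd (h c hc) hc0
      subst this
      obtain ⟨s, hs1, hs2⟩ := ess_elt hL _ hc0
      refine ⟨s, ?_, c, hc, hs2⟩
      intro d hd
      rcases Finset.mem_insert.1 hd with rfl | hd
      · exact hs1
      · rw [h d hd, mul_zero]; exact zero_mem _

section Main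
variable {R : Type*} [Ring R]

theorem sing_inv (hP : IsLeftPInjective R) {z : R} (hz : z ∈ lSingular R) (s : R) :
    ∃ d, (1 + z * s) * d = 1 := by
  have h0 : lAnnI R {1 + z * s} = ⊥ := by
    apply hz
    rw [eq_bot_iff]
    rintro u ⟨h1, h2⟩
    replace h1 : u * (1 + z * s) = 0 := (mem_lAnnI1 _ _).1 h1
    replace h2 : u * z = 0 := (mem_lAnnI1 _ _).1 h2
    rw [mul_add, mul_one, ← mul_assoc, h2, zero_mul, add_zero] at h1
    simpa using h1
  obtain ⟨d, hd⟩ := (hP (1 + z * s) 1).1 (by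
    intro u hu
    rw [← mem_lAnnI1, h0] at hu
    have : u = 0 := by simpa using hu
    rw [this, zero_mul])
  exact ⟨d, hd.symm⟩

theorem jac_iff (hP : IsLeftPInjective R) (x : R) :
    op x ∈ Ring.jacobson Rᵐᵒᵖ ↔ x ∈ lSingular R := by
  rw [← Ideal.jacobson_bot, Ideal.mem_jacobson_iff]
  constructor
  · intro h K hK
    rw [eq_bot_iff]
    intro b hb
    obtain ⟨s, hs⟩ := (hP (b * x) b).1 (by
      intro u hu
      have : u * b ∈ K ⊓ lAnnI R {x} :=
        ⟨K.mul_mem_left _ hb, (mem_lAnnI1 _ _).2 (by rw [mul_assoc]; exact hu)⟩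
      rw [hK] at this
      simpa using this)
    obtain ⟨z, hz⟩ := h (-op s)
    have hz' : (1 - x * s) * unop z = 1 := by
      have := congrArg unop (sub_eq_zero.1 ((Submodule.mem_bot _).1 hz))
      simp only [unop_add, unop_mul, unop_neg, unop_op, unop_one] at this
      refine Eq.trans ?_ this
      noncomm_ring
    have : b = b * (1 - x * s) * unop z := by rw [mul_assoc, hz', mul_one]
    rw [mul_sub, mul_one, ← mul_assoc, ← hs, sub_self, zero_mul] at this
    simpa using this
  · intro h y
    obtain ⟨d, hd⟩ := sing_inv hP h (unop y)
    refine ⟨op d, ?_⟩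
    rw [Submodule.mem_bot, sub_eq_zero]
    apply unop_injective
    simp only [unop_add, unop_mul, unop_op, unop_one]
    rw [← hd]
    noncomm_ring

variable [IsNoetherianRing Rᵐᵒᵖ]

theorem ded_fin (a b : R) (h : a * b = 1) : b * a = 1 := by
  have : op b * op a = 1 := by rw [← op_mul, h, op_one]
  have h2 := mul_eq_one_symm this
  rw [← op_mul] at h2
  exact op_injective h2

theorem reg_inv (hP : IsLeftPInjective R)
    (hC : ∀ C : Ideal R, IsComplementLeftIdeal R C → C ≠ ⊥ → ¬ IsSmallLeftIdeal R C)
    (a : R) (ha : ∀ x, x * a ∈ lSingular R → x ∈ lSingular R) : ∃ c, a * c = 1 := by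
  have key : lAnnI R {a} = ⊥ := by
    by_contra hne
    obtain ⟨S, -, hS, hSm⟩ := exists_max_disjoint (lAnnI R {a}) ⊥ (by simp)
    obtain ⟨C, hLC, hCS, hCm⟩ := exists_max_disjoint S (lAnnI R {a}) (by rw [inf_comm]; exact hS)
    have hess := ess_sup_of_max _ _ hS hSm
    have hCZ : ∀ c ∈ C, c ∈ lSingular R := by
      intro c hc
      apply ha
      intro K hK
      have hD := hess (Submodule.map (LinearMap.toSpanSingleton R R c) K) (by
        rw [eq_bot_iff]
        rintro _ ⟨⟨k, hk, rfl⟩, h2⟩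
        simp only [LinearMap.toSpanSingleton_apply, smul_eq_mul] at h2 ⊢
        obtain ⟨s, hs, l, hl, hsl⟩ := Submodule.mem_sup.1 h2
        have hs0 : s ∈ C ⊓ S := by
          refine ⟨?_, hs⟩
          rw [eq_sub_of_add_eq hsl]
          exact sub_mem (C.mul_mem_left _ hc) (hLC hl)
        rw [hCS] at hs0
        have hs0' : s = 0 := by simpa using hs0
        rw [hs0', zero_add] at hsl
        rw [hsl] at hl
        rw [mem_lAnnI1, mul_assoc, ← mem_lAnnI1] at hl
        have : k ∈ K ⊓ lAnnI R {c * a} := ⟨hk, hl⟩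
        rw [hK] at this
        have hk0 : k = 0 := by simpa using this
        simp [hk0])
      rw [eq_bot_iff]
      intro k hk
      rw [← hK]
      refine ⟨hk, (mem_lAnnI1 _ _).2 ?_⟩
      have : k * c ∈ Submodule.map (LinearMap.toSpanSingleton R R c) K := ⟨k, hk, rfl⟩
      rw [hD] at this
      have hkc : k * c = 0 := by simpa using this
      rw [← mul_assoc, hkc, zero_mul]
    refine hC C ⟨S, hCS, hCm⟩ ?_ ?_
    · rintro rfl
      exact hne (le_bot_iff.1 hLC)
    · intro K hK
      have h1 : (1 : R) ∈ K ⊔ C := by rw [hK]; trivial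
      obtain ⟨k, hk, c, hc, hkc⟩ := Submodule.mem_sup.1 h1
      obtain ⟨d, hd⟩ := sing_inv hP (hCZ c hc) (-1)
      have hk' : 1 + c * (-1) = k := by rw [eq_sub_of_add_eq hkc]; noncomm_ring
      rw [hk'] at hd
      refine (Ideal.eq_top_iff_one _).2 ?_
      rw [← ded_fin _ _ hd]
      exact K.mul_mem_left _ hk
  obtain ⟨d, hd⟩ := (hP a 1).1 (by
    intro u hu
    rw [← mem_lAnnI1, key] at hu
    have : u = 0 := by simpa using hu
    rw [this, zero_mul])
  exact ⟨d, hd.symm⟩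

theorem lJ_ess (hP : IsLeftPInjective R) :
    IsEssentialLIdeal R (lAnnI R {x | op x ∈ Ring.jacobson Rᵐᵒᵖ}) := by
  classical
  obtain ⟨F, hF⟩ := IsNoetherian.noetherian (R := Rᵐᵒᵖ) (M := Rᵐᵒᵖ) (Ring.jacobson Rᵐᵒᵖ)
  have h1 : ∀ G : Finset Rᵐᵒᵖ, (∀ g ∈ G, g ∈ Ring.jacobson Rᵐᵒᵖ) →
      IsEssentialLIdeal R (G.inf fun b => lAnnI R {unop b}) := by
    intro G
    induction G using Finset.induction_on with
    | empty => intro _ K hK; simpa using hK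
    | insert a G ha ih =>
      intro h
      rw [Finset.inf_insert]
      refine ess_inf ?_ (ih fun g hg => h g (Finset.mem_insert_of_mem hg))
      exact (jac_iff hP (unop a)).1 (h a (Finset.mem_insert_self _ _))
  refine ess_mono (h1 F fun g hg => hF ▸ Submodule.subset_span hg) ?_
  intro u hu x hx
  have hu' : ∀ b ∈ F, u * unop b = 0 := by
    intro b hb
    exact (mem_lAnnI1 _ _).1 ((Finset.inf_le (f := fun b => lAnnI R {unop b}) hb) hu)
  have hle : Ring.jacobson Rᵐᵒᵖ ≤ lAnnI Rᵐᵒᵖ {op u} := by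
    rw [← hF, Submodule.span_le]
    intro b hb
    refine (mem_lAnnI1 _ _).2 ?_
    apply unop_injective
    simpa using hu' b hb
  have := (mem_lAnnI1 _ _).1 (hle hx)
  rw [← op_mul] at this
  exact op_injective this

theorem jac_nil (hP : IsLeftPInjective R) : IsNilpotent (Ring.jacobson Rᵐᵒᵖ) := by
  classical
  obtain ⟨n, hn⟩ := monotone_stabilizes_iff_noetherian.2
    (inferInstanceAs (IsNoetherian Rᵐᵒᵖ Rᵐᵒᵖ))
    ⟨fun n => rightAnnIdeal (Ring.jacobson Rᵐᵒᵖ ^ n), by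
      intro m n hmn u hu j hj
      exact hu j (Ideal.pow_le_pow_right hmn hj)⟩
  refine ⟨n, ?_⟩
  by_contra hne
  have hst : rightAnnIdeal (Ring.jacobson Rᵐᵒᵖ ^ n) = rightAnnIdeal (Ring.jacobson Rᵐᵒᵖ ^ (n + 1)) :=
    hn (n + 1) (by omega)
  obtain ⟨F, hF⟩ := IsNoetherian.noetherian (R := Rᵐᵒᵖ) (M := Rᵐᵒᵖ)
    (Ring.jacobson Rᵐᵒᵖ ^ n)
  have hF0 : ∃ c ∈ F.image unop, c ≠ 0 := by
    by_contra! h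
    apply hne
    rw [← hF]
    refine Submodule.span_eq_bot.2 ?_
    intro x hx
    exact unop_injective (h (unop x) (Finset.mem_image_of_mem _ hx))
  obtain ⟨r, hr, c0, hc0, hrc0⟩ := ess_finset (lJ_ess hP) _ hF0
  have hle : Ring.jacobson Rᵐᵒᵖ ^ n ≤
      Submodule.comap (LinearMap.toSpanSingleton Rᵐᵒᵖ Rᵐᵒᵖ (op r))
        (rightAnnIdeal (Ring.jacobson Rᵐᵒᵖ)) := by
    rw [← hF, Submodule.span_le]
    intro c hc j hj
    have := hr (unop c) (Finset.mem_image_of_mem _ hc) (unop j) hj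
    apply unop_injective
    simpa using this
  have hmem : op r ∈ rightAnnIdeal (Ring.jacobson Rᵐᵒᵖ ^ (n + 1)) := by
    have hle2 : Ring.jacobson Rᵐᵒᵖ ^ (n + 1) ≤ lAnnI Rᵐᵒᵖ {op r} := by
      rw [Ideal.IsTwoSided.pow_succ, Ideal.mul_le]
      intro j hj x hx
      rw [mem_lAnnI1, mul_assoc]
      exact hle hx j hj
    intro j hj
    exact (mem_lAnnI1 _ _).1 (hle2 hj)
  rw [← hst] at hmem
  obtain ⟨c, hc, rfl⟩ := Finset.mem_image.1 hc0
  apply hrc0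
  have := congrArg unop (hmem c (hF ▸ Submodule.subset_span hc))
  simpa using this

theorem jac_ss (hP : IsLeftPInjective R)
    (hC : ∀ C : Ideal R, IsComplementLeftIdeal R C → C ≠ ⊥ → ¬ IsSmallLeftIdeal R C) :
    IsSemisimpleRing (Rᵐᵒᵖ ⧸ Ring.jacobson Rᵐᵒᵖ) := by
  have : IsNoetherianRing (Rᵐᵒᵖ ⧸ Ring.jacobson Rᵐᵒᵖ) :=
    isNoetherianRing_of_surjective _ _ (Ideal.Quotient.mk (Ring.jacobson Rᵐᵒᵖ))
      Ideal.Quotient.mk_surjective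
  apply goldie_ss
  · intro a h
    obtain ⟨a, rfl⟩ := Ideal.Quotient.mk_surjective a
    rw [Ideal.Quotient.eq_zero_iff_mem]
    have h' : ∀ t, a * t * a ∈ Ring.jacobson Rᵐᵒᵖ := by
      intro t
      rw [← Ideal.Quotient.eq_zero_iff_mem, map_mul, map_mul]
      exact h _
    rw [← Ideal.jacobson_bot, Ideal.mem_jacobson_iff]
    intro y
    have h2 := h' y
    rw [← Ideal.jacobson_bot, Ideal.mem_jacobson_iff] at h2
    obtain ⟨z, hz⟩ := h2 (-y)
    refine ⟨z * (1 - y * a), ?_⟩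
    convert hz using 1
    noncomm_ring
  · intro a h
    obtain ⟨a, rfl⟩ := Ideal.Quotient.mk_surjective a
    obtain ⟨c, hc⟩ := reg_inv hP hC (unop a) (by
      intro x hx
      rw [← jac_iff hP] at hx ⊢
      rw [← Ideal.Quotient.eq_zero_iff_mem] at hx ⊢
      apply h
      rw [← map_mul]
      exact hx)
    refine ⟨Ideal.Quotient.mk _ (op c), ?_⟩
    rw [← map_mul, ← map_one (Ideal.Quotient.mk (Ring.jacobson Rᵐᵒᵖ))]
    congr 1
    apply unop_injective
    simpa using hc

end Main

/-- If moreover every nonzero complement left ideal is not small, `R` is right artinian. -/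
theorem stmt6 {R : Type*} [Ring R] [IsNoetherianRing Rᵐᵒᵖ] (hP : IsLeftPInjective R)
    (hC : ∀ C : Ideal R, IsComplementLeftIdeal R C → C ≠ ⊥ → ¬ IsSmallLeftIdeal R C) :
    IsArtinianRing Rᵐᵒᵖ := by
  have : IsSemiprimaryRing Rᵐᵒᵖ := ⟨jac_ss hP hC, jac_nil hP⟩
  exact IsSemiprimaryRing.isNoetherian_iff_isArtinian.1 ‹_›
end

section
/- A ring R is quasi-Frobenius if and only if R is right noetherian, left 2-injective, and every nonzero complement left ideal of R is not small. -/
namespace NF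

lemma exists_max {β α : Type*} [PartialOrder β] [WellFoundedGT β] (p : α → Prop) (f : α → β)
    (h : ∃ a, p a) : ∃ a, p a ∧ ∀ b, p b → f a ≤ f b → f b = f a := by
  obtain ⟨m, ⟨a, ha, rfl⟩, hm⟩ := (wellFounded_gt (α := β)).has_min (f '' {a | p a})
    (by obtain ⟨a, ha⟩ := h; exact ⟨_, a, ha, rfl⟩)
  refine ⟨a, ha, fun b hb hab => ?_⟩
  by_contra hne
  exact hm (f b) ⟨b, hb, rfl⟩ (lt_of_le_of_ne hab (Ne.symm hne))

lemma exists_stab {β : Type*} [PartialOrder β] [WellFoundedGT β] (f : ℕ → β)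
    (h : ∀ n, f n ≤ f (n + 1)) : ∃ n, ∀ m, n ≤ m → f m = f n := by
  obtain ⟨n, hn⟩ := WellFoundedGT.monotone_chain_condition ⟨f, monotone_nat_of_le_succ h⟩
  exact ⟨n, fun m hm => (hn m hm).symm⟩

section Goldie
variable {A : Type*} [Ring A]

/-- left annihilator of an element -/
def la (a : A) : Ideal A := LinearMap.ker (LinearMap.toSpanSingleton A A a)

lemma mem_la {a x : A} : x ∈ la a ↔ x * a = 0 := by
  simp [la]

lemma la_le_mul (a b : A) : la a ≤ la (a * b) := by
  intro x hx
  rw [mem_la] at *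
  rw [← mul_assoc, hx, zero_mul]

/-- every nonzero left ideal contained in `K` meets `I` -/
lemma ess_iff {I : Ideal A} :
    IsEssentialLIdeal A I ↔ ∀ x : A, x ≠ 0 → ∃ r, r * x ≠ 0 ∧ r * x ∈ I := by
  constructor
  · intro h x hx
    by_contra hc
    push Not at hc
    apply hx
    have := h (Ideal.span {x}) (by
      rw [eq_bot_iff]
      rintro y ⟨hy, hyI⟩
      obtain ⟨r, rfl⟩ := Ideal.mem_span_singleton'.1 hy
      by_contra hne
      exact hc r hne hyI)
    exact Ideal.span_singleton_eq_bot.1 this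
  · intro h K hK
    rw [eq_bot_iff]
    intro x hx
    by_contra hne
    obtain ⟨r, h1, h2⟩ := h x hne
    apply h1
    have : r * x ∈ K ⊓ I := ⟨K.mul_mem_left r hx, h2⟩
    rw [hK] at this
    exact this

lemma isNilpotent_swap {a b : A} (h : IsNilpotent (a * b)) : IsNilpotent (b * a) := by
  obtain ⟨n, hn⟩ := h
  refine ⟨n + 1, ?_⟩
  have : ∀ n, (b * a) ^ (n + 1) = b * (a * b) ^ n * a := by
    intro n
    induction n with
    | zero => simp
    | succ n ih => rw [pow_succ, ih, pow_succ]; simp only [mul_assoc]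
  rw [this, hn]; simp

variable [IsNoetherianRing A]

lemma levitzki (hsp : ∀ a : A, (∀ b, a * b * a = 0) → a = 0) {a : A} (ha : a ≠ 0) :
    ∃ b, ¬ IsNilpotent (a * b) := by
  by_contra hc
  push Not at hc
  obtain ⟨u, ⟨hu, v, rfl⟩, hmax⟩ := exists_max (fun u : A => u ≠ 0 ∧ ∃ v, u = a * v) la
    ⟨a, ha, 1, by simp⟩
  apply hu
  apply hsp
  intro b
  by_cases h0 : a * v * b = 0
  · rw [h0, zero_mul]
  have hnil : IsNilpotent (a * v * b) := by rw [mul_assoc]; exact hc _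
  have hnt : Nontrivial A := ⟨⟨_, _, ha⟩⟩
  obtain ⟨n, hn0, hn1⟩ : ∃ n, (a*v*b) ^ (n+1) ≠ 0 ∧ (a*v*b)^(n+1+1) = 0 := by
    have hex : ∃ n, (a*v*b)^n = 0 := hnil
    classical
    have h1 := Nat.find_spec hex
    have hm : ∀ m < Nat.find hex, (a*v*b)^m ≠ 0 := fun m hm => Nat.find_min hex hm
    rcases hk : Nat.find hex with _ | _ | k
    · rw [hk] at h1; simp at h1
    · rw [hk] at h1; simp at h1; exact absurd h1 h0
    · rw [hk] at h1 hm
      exact ⟨k, hm _ (by omega), h1⟩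
  have heq := hmax ((a*v*b)^(n+1)) ⟨hn0, v * b * (a*v*b)^n, by rw [pow_succ']; simp only [mul_assoc]⟩
    (by rw [pow_succ', mul_assoc]; exact la_le_mul _ _)
  have : a * v * b ∈ la ((a*v*b)^(n+1)) := by rw [mem_la, ← pow_succ']; exact hn1
  rw [heq, mem_la] at this
  exact this

lemma exists_pow_la (a : A) : ∃ n, 1 ≤ n ∧ ∀ x, x * (a ^ n * a ^ n) = 0 → x * a ^ n = 0 := by
  obtain ⟨n, hn⟩ := exists_stab (fun n => la (a ^ n)) (fun n => by
    rw [pow_succ]; exact la_le_mul _ _)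
  refine ⟨n + 1, by omega, fun x hx => ?_⟩
  rw [← mem_la] at *
  rw [← pow_add] at hx
  rw [hn _ (by omega)] at hx ⊢
  exact hx

lemma goldieG (hsp : ∀ a : A, (∀ b, a * b * a = 0) → a = 0) (E : Ideal A) :
    ∃ h ∈ E, ∀ x ∈ E, x * h = 0 → x = 0 := by
  obtain ⟨⟨N, c⟩, ⟨hcE, hcN, hN⟩, hmax⟩ := exists_max
    (fun p : Ideal A × A => p.2 ∈ E ∧ p.2 ∈ p.1 ∧ ∀ x ∈ p.1, x * p.2 = 0 → x = 0) Prod.fst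
    ⟨(⊥, 0), by simp⟩
  dsimp only at hcE hcN hN hmax
  refine ⟨c, hcE, fun x hx hxc => ?_⟩
  by_contra hne
  obtain ⟨b, hb⟩ := levitzki hsp hne
  have hb' : ¬ IsNilpotent (b * x) := fun h => hb (isNilpotent_swap h)
  obtain ⟨n, hn1, hn⟩ := exists_pow_la (b * x)
  obtain ⟨m, rfl⟩ : ∃ m, n = m + 1 := ⟨n - 1, by omega⟩
  set a := (b * x) ^ (m + 1) with ha
  have ha0 : a ≠ 0 := fun h => hb' ⟨_, h⟩
  have haE : a ∈ E := by
    rw [ha, pow_succ]; exact E.mul_mem_left _ (E.mul_mem_left _ hx)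
  have hac : a * c = 0 := by rw [ha, pow_succ]; simp [mul_assoc, hxc]
  have haN : a ∉ N := fun h => ha0 (hN a h hac)
  have key := hmax (N ⊔ Ideal.span {a}, c + a) ⟨E.add_mem hcE haE,
    Ideal.add_mem _ (Ideal.mem_sup_left hcN) (Ideal.mem_sup_right (Ideal.mem_span_singleton_self a)), by
      intro y hy hyc
      dsimp only at hy hyc
      rw [mul_add] at hyc
      have hyc0 : y * c = 0 := by
        apply hN _ (N.mul_mem_left _ hcN)
        have : y * c = - (y * a) := eq_neg_of_add_eq_zero_left hyc
        rw [this, neg_mul, mul_assoc, hac]; simp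
      have hya0 : y * a = 0 := by rw [hyc0, zero_add] at hyc; exact hyc
      obtain ⟨p, hp, q, hq, rfl⟩ := Submodule.mem_sup.1 hy
      obtain ⟨r, rfl⟩ := Ideal.mem_span_singleton'.1 hq
      have hp0 : p = 0 := by
        apply hN _ hp
        rw [add_mul, mul_assoc, hac] at hyc0; simpa using hyc0
      subst hp0
      rw [zero_add] at hya0 ⊢
      apply hn
      rw [← mul_assoc]; exact hya0⟩ le_sup_left
  dsimp only at key
  apply haN
  rw [← key]
  exact Ideal.mem_sup_right (Ideal.mem_span_singleton_self a)

lemma la_zero_ess {c : A} (hc : ∀ x, x * c = 0 → x = 0) :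
    IsEssentialLIdeal A (Ideal.span {c}) := by
  intro K hK
  have : Subsingleton K := by
    refine IsNoetherian.subsingleton_of_prod_injective (R := A) (M := A)
      ((LinearMap.toSpanSingleton A A c).coprod K.subtype) ?_
    rw [← LinearMap.ker_eq_bot, eq_bot_iff]
    rintro ⟨x, k, hk⟩ hx
    simp only [LinearMap.mem_ker, LinearMap.coprod_apply, LinearMap.toSpanSingleton_apply,
      Submodule.subtype_apply, smul_eq_mul] at hx
    have hk0 : k = 0 := by
      have : k ∈ K ⊓ Ideal.span {c} := ⟨hk, by
        rw [eq_neg_of_add_eq_zero_right hx]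
        exact neg_mem (Ideal.mem_span_singleton'.2 ⟨x, rfl⟩)⟩
      rw [hK] at this; exact this
    subst hk0
    rw [add_zero] at hx
    simp [hc x hx]
  exact Submodule.subsingleton_iff_eq_bot.1 this

lemma la_zero_ra (hsp : ∀ a : A, (∀ b, a * b * a = 0) → a = 0) {c : A}
    (hc : ∀ x, x * c = 0 → x = 0) (y : A) (hy : c * y = 0) : y = 0 := by
  by_contra hne
  obtain ⟨b, hb⟩ := levitzki hsp hne
  apply hb
  set z := y * b with hz
  have hess : ∀ x : A, x ≠ 0 → ∃ r, r * x ≠ 0 ∧ r * x * z = 0 := by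
    intro x hx
    obtain ⟨r, h1, h2⟩ := ess_iff.1 (la_zero_ess hc) x hx
    refine ⟨r, h1, ?_⟩
    obtain ⟨s, hs⟩ := Ideal.mem_span_singleton'.1 h2
    rw [← hs, hz, mul_assoc, ← mul_assoc c, hy]; simp
  obtain ⟨n, hn⟩ := exists_stab (fun n => la (z ^ n)) (fun n => by
    rw [pow_succ]; exact la_le_mul _ _)
  refine ⟨n, ?_⟩
  by_contra h0
  obtain ⟨r, h1, h2⟩ := hess _ h0
  apply h1
  rw [← mem_la, ← hn (n + 1) (by omega), mem_la, pow_succ, ← mul_assoc]; exact h2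

lemma exists_compl {I L : Ideal A} (hI : L ⊓ I = ⊥) :
    ∃ C : Ideal A, L ≤ C ∧ C ⊓ I = ⊥ ∧ ∀ C' : Ideal A, C ≤ C' → C' ⊓ I = ⊥ → C' = C := by
  obtain ⟨C, ⟨h1, h2⟩, h3⟩ := exists_max (fun C : Ideal A => L ≤ C ∧ C ⊓ I = ⊥) id ⟨L, le_rfl, hI⟩
  exact ⟨C, h1, h2, fun C' h h' => h3 C' ⟨h1.trans h, h'⟩ h⟩

theorem goldie_semisimple (hsp : ∀ a : A, (∀ b, a * b * a = 0) → a = 0)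
    (hinv : ∀ c : A, (∀ y, c * y = 0 → y = 0) → ∃ d, d * c = 1) : IsSemisimpleRing A := by
  have : ComplementedLattice (Submodule A A) := by
    constructor
    intro I
    obtain ⟨C, -, h1, h2⟩ := exists_compl (A := A) (I := I) (L := ⊥) (by simp)
    refine ⟨C, disjoint_iff.2 (by rw [inf_comm]; exact h1), codisjoint_iff.2 ?_⟩
    have hess : IsEssentialLIdeal A (I ⊔ C) := by
      intro K hK
      have h3 : C ⊔ K = C := by
        apply h2 _ le_sup_left
        rw [eq_bot_iff]
        rintro x ⟨hx, hxI⟩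
        obtain ⟨c, hc, k, hk, rfl⟩ := Submodule.mem_sup.1 hx
        have hk0 : k ∈ K ⊓ (I ⊔ C) := ⟨hk, by
          have : k = (c + k) - c := by abel
          rw [this]
          exact sub_mem (Ideal.mem_sup_left hxI) (Ideal.mem_sup_right hc)⟩
        rw [hK] at hk0
        have hk0' : k = 0 := hk0
        subst hk0'
        rw [add_zero] at *
        have : c ∈ C ⊓ I := ⟨hc, hxI⟩
        rw [h1] at this; exact this
      have h4 : K ≤ I ⊔ C := (le_sup_right.trans h3.le).trans le_sup_right
      rw [← hK]; exact (inf_eq_left.2 h4).symm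
    obtain ⟨h, hh, hx⟩ := goldieG hsp (I ⊔ C)
    have hz : la h = ⊥ := by
      apply hess
      rw [eq_bot_iff]
      rintro x ⟨hx1, hx2⟩
      exact hx x hx2 (mem_la.1 hx1)
    obtain ⟨d, hd⟩ := hinv h (la_zero_ra hsp (fun x hx => by
      rw [← mem_la, hz] at hx; exact hx))
    rw [Ideal.eq_top_iff_one, ← hd]
    exact Ideal.mul_mem_left _ _ hh
  exact (isSemisimpleModule_iff A A).2 this

end Goldie
end NF

namespace NF
section Jac
variable {A : Type*} [Ring A]

lemma isUnit_one_sub_swap {a b : A} (h : IsUnit (1 - a * b)) : IsUnit (1 - b * a) := by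
  obtain ⟨u, hu⟩ := h
  have h1 : (1 - a * b) * ↑u⁻¹ = 1 := by rw [← hu]; simp
  have h2 : ↑u⁻¹ * (1 - a * b) = 1 := by rw [← hu]; simp
  set v : A := ↑u⁻¹
  refine ⟨⟨1 - b * a, 1 + b * v * a, ?_, ?_⟩, rfl⟩
  · have : (1 - b * a) * (1 + b * v * a) = 1 - b * a + b * ((1 - a * b) * v) * a := by noncomm_ring
    rw [this, h1]; noncomm_ring
  · have : (1 + b * v * a) * (1 - b * a) = 1 - b * a + b * (v * (1 - a * b)) * a := by noncomm_ring
    rw [this, h2]; noncomm_ring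

lemma mem_jac_iff {x : A} : x ∈ Ring.jacobson A ↔ ∀ y, IsUnit (1 - y * x) := by
  have hJ : ∀ x : A, x ∈ Ring.jacobson A ↔ ∀ M : Ideal A, M.IsMaximal → x ∈ M := by
    intro x
    rw [Ring.jacobson_eq_sInf_isMaximal, Submodule.mem_sInf]; rfl
  have hleft : ∀ x ∈ Ring.jacobson A, ∃ d, d * (1 - x) = 1 := by
    intro x hx
    by_contra hc
    have hne : Ideal.span {1 - x} ≠ ⊤ := by
      intro h
      rw [Ideal.eq_top_iff_one] at h
      exact hc (Ideal.mem_span_singleton'.1 h)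
    obtain ⟨M, hM, hle⟩ := Ideal.exists_le_maximal _ hne
    apply hM.ne_top
    rw [Ideal.eq_top_iff_one]
    have h1 := (hJ x).1 hx M hM
    have h2 := hle (Ideal.mem_span_singleton_self (1 - x))
    have := M.add_mem h2 h1
    simpa using this
  constructor
  · intro hx y
    have hyx : y * x ∈ Ring.jacobson A := Ideal.mul_mem_left _ _ hx
    obtain ⟨d, hd⟩ := hleft _ hyx
    have hd1 : 1 - d = - (d * (y * x)) := by
      rw [mul_sub, mul_one] at hd
      rw [← hd]; abel
    obtain ⟨e, he⟩ := hleft (1 - d) (by rw [hd1]; exact neg_mem (Ideal.mul_mem_left _ _ hyx))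
    rw [sub_sub_cancel] at he
    have : e = 1 - y * x := by
      calc e = e * (d * (1 - y * x)) := by rw [hd, mul_one]
        _ = 1 - y * x := by rw [← mul_assoc, he, one_mul]
    subst this
    exact ⟨⟨_, d, he, hd⟩, rfl⟩
  · intro h
    rw [hJ]
    intro M hM
    by_contra hxM
    have : M ⊔ Ideal.span {x} = ⊤ := by
      apply hM.1.2
      exact lt_of_le_of_ne le_sup_left (fun h' => hxM (by
        rw [h']; exact Ideal.mem_sup_right (Ideal.mem_span_singleton_self x)))
    rw [Ideal.eq_top_iff_one] at this
    obtain ⟨m, hm, q, hq, hmq⟩ := Submodule.mem_sup.1 this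
    obtain ⟨y, rfl⟩ := Ideal.mem_span_singleton'.1 hq
    have hm' : m = 1 - y * x := by rw [← hmq]; abel
    apply hM.ne_top
    exact Ideal.eq_top_of_isUnit_mem _ hm (hm' ▸ h y)

lemma mem_jac_iff' {x : A} : x ∈ Ring.jacobson A ↔ ∀ y, IsUnit (1 - x * y) := by
  rw [mem_jac_iff]
  exact ⟨fun h y => isUnit_one_sub_swap (h y), fun h y => isUnit_one_sub_swap (h y)⟩

lemma op_mem_jac {x : A} : MulOpposite.op x ∈ Ring.jacobson Aᵐᵒᵖ ↔ x ∈ Ring.jacobson A := by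
  rw [mem_jac_iff, mem_jac_iff']
  constructor
  · intro h y
    have := (h (MulOpposite.op y)).unop
    simpa using this
  · intro h y
    have := (h y.unop).op
    simpa using this

/-- jacobson elements are right singular under right P-injectivity -/
lemma jac_sing (hP : ∀ a x : A, (∀ u, a * u = 0 → x * u = 0) → ∃ s, x = s * a)
    {z : A} (hz : z ∈ Ring.jacobson A) {x : A} (hx : x ≠ 0) :
    ∃ r, x * r ≠ 0 ∧ z * (x * r) = 0 := by
  by_contra hc
  push Not at hc
  obtain ⟨s, hs⟩ := hP (z * x) x (fun u hu => by
    by_contra hne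
    exact hc u hne (by rw [← mul_assoc]; exact hu))
  apply hx
  have h1 : (1 - s * z) * x = 0 := by
    rw [sub_mul, one_mul, mul_assoc, ← hs, sub_self]
  exact (mem_jac_iff.1 hz s).mul_right_eq_zero.1 h1

end Jac

section Nilp
variable {A : Type*} [Ring A] [IsNoetherianRing A]

lemma mem_lAnnI {X : Set A} {q : A} : q ∈ lAnnI A X ↔ ∀ x ∈ X, q * x = 0 := Iff.rfl

lemma Q_mul {P : Ideal A} {q r : A} (hq : q ∈ lAnnI A (P : Set A)) : q * r ∈ lAnnI A (P : Set A) := by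
  intro p hp
  rw [mul_assoc]
  exact hq _ (P.mul_mem_left r hp)

lemma Q_surj (hP : ∀ a x : A, (∀ u, a * u = 0 → x * u = 0) → ∃ s, x = s * a)
    {P : Ideal A} {c : A} (hc : ∀ x, c * x ∈ P → x ∈ P) {q : A}
    (hq : q ∈ lAnnI A (P : Set A)) : ∃ q' ∈ lAnnI A (P : Set A), q = q' * c := by
  have hck : ∀ k x, c ^ k * x ∈ P → x ∈ P := by
    intro k
    induction k with
    | zero => intro x hx; simpa using hx
    | succ k ih => intro x hx; rw [pow_succ, mul_assoc] at hx; exact hc _ (ih _ hx)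
  obtain ⟨k, hk⟩ := exists_stab
    (fun k => Submodule.comap (LinearMap.toSpanSingleton A A (c ^ k)) (lAnnI A (P : Set A))) (by
      intro k x hx
      simp only [Submodule.mem_comap, LinearMap.toSpanSingleton_apply, smul_eq_mul] at *
      rw [pow_succ, ← mul_assoc]
      exact Q_mul hx)
  obtain ⟨x, hx⟩ := hP (c ^ (k + 1)) q (fun u hu => hq _ (hck (k + 1) u (by rw [hu]; exact P.zero_mem)))
  have h1 : x ∈ Submodule.comap (LinearMap.toSpanSingleton A A (c ^ (k+1))) (lAnnI A (P : Set A)) := by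
    simp only [Submodule.mem_comap, LinearMap.toSpanSingleton_apply, smul_eq_mul]
    rw [← hx]; exact hq
  rw [hk (k + 1) (by omega)] at h1
  refine ⟨x * c ^ k, h1, ?_⟩
  rw [hx, pow_succ, mul_assoc]

lemma Q_inj (hP : ∀ a x : A, (∀ u, a * u = 0 → x * u = 0) → ∃ s, x = s * a)
    {P : Ideal A} {c : A} (hc : ∀ x, c * x ∈ P → x ∈ P) {q : A}
    (hq : q ∈ lAnnI A (P : Set A)) (h0 : q * c = 0) : q = 0 := by
  obtain ⟨k, hk⟩ := exists_stab (fun k => la (c ^ k)) (fun n => by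
    rw [pow_succ]; exact la_le_mul _ _)
  have : ∀ k, ∃ q' ∈ lAnnI A (P : Set A), q = q' * c ^ k := by
    intro k
    induction k with
    | zero => exact ⟨q, hq, by simp⟩
    | succ k ih =>
      obtain ⟨q', h1, h2⟩ := ih
      obtain ⟨q'', h3, h4⟩ := Q_surj hP hc h1
      exact ⟨q'', h3, by rw [h2, h4, pow_succ', mul_assoc]⟩
  obtain ⟨q', -, h2⟩ := this k
  rw [h2, ← mem_la, ← hk (k + 1) (by omega), mem_la, pow_succ, ← mul_assoc, ← h2, h0]

lemma prime_case (hP : ∀ a x : A, (∀ u, a * u = 0 → x * u = 0) → ∃ s, x = s * a)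
    (P : Ideal A) [P.IsTwoSided] (hprime : ∀ a b, (∀ r, a * r * b ∈ P) → a ∈ P ∨ b ∈ P)
    {z x0 : A} (hz : z ∈ Ring.jacobson A) (hx0 : x0 ∈ lAnnI A (P : Set A)) : z * x0 = 0 := by
  by_contra hne
  have hx00 : x0 ≠ 0 := by rintro rfl; simp at hne
  set π := Ideal.Quotient.mk P with hπ
  have hπ0 : ∀ x, π x = 0 ↔ x ∈ P := fun x => Ideal.Quotient.eq_zero_iff_mem
  have hπs : Function.Surjective π := Ideal.Quotient.mk_surjective
  have : IsNoetherianRing (A ⧸ P) := isNoetherianRing_of_surjective A (A ⧸ P) π hπs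
  have hsp : ∀ a : A ⧸ P, (∀ b, a * b * a = 0) → a = 0 := by
    intro a h
    obtain ⟨a, rfl⟩ := hπs a
    rw [hπ0]
    rcases hprime a a (fun r => by rw [← hπ0, map_mul, map_mul]; exact h _) with h | h <;> exact h
  have hone : (1 : A) ∉ P := fun h => hx00 (by simpa using hx0 1 h)
  -- regular elements
  have hreg : ∀ c : A, (∀ x : A ⧸ P, x * π c = 0 → x = 0) → ∀ x, c * x ∈ P → x ∈ P := by
    intro c hc x hx
    rw [← hπ0] at hx ⊢
    rw [map_mul] at hx
    exact la_zero_ra hsp hc _ hx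
  obtain ⟨g, hg, hgmax⟩ := exists_max (fun g : A => g ∉ P)
    (fun g => la g ⊓ lAnnI A (P : Set A)) ⟨1, hone⟩
  -- find r
  obtain ⟨r, hr⟩ : ∃ r, z * x0 * r * g ≠ 0 := by
    by_contra hc
    push Not at hc
    obtain ⟨h, hhE, hh⟩ := goldieG hsp (Ideal.span (Set.range fun r => π g * r))
    obtain ⟨c, rfl⟩ := hπs h
    have hc0 : ∀ y : A ⧸ P, y * π c = 0 → y = 0 := by
      intro y hy
      by_contra hyne
      obtain ⟨y, rfl⟩ := hπs y
      rw [hπ0] at hyne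
      have : ∃ r, g * r * y ∉ P := by
        by_contra hcc
        push Not at hcc
        rcases hprime g y hcc with h | h
        · exact hg h
        · exact hyne h
      obtain ⟨r, hr⟩ := this
      apply hr
      rw [← hπ0]
      apply hh
      · apply Ideal.subset_span
        exact ⟨π (r * y), by simp [mul_assoc]⟩
      · rw [map_mul, mul_assoc, hy, mul_zero]
    have key : ∀ h ∈ Ideal.span (Set.range fun r => π g * r), ∀ c, π c = h →
        ∀ s, z * x0 * s * c = 0 := by
      intro h hh
      have hPz : ∀ p ∈ P, ∀ s, z * x0 * s * p = 0 := by
        intro p hp s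
        have := (Q_mul (r := s) hx0) p hp
        rw [mul_assoc z, mul_assoc z, this, mul_zero]
      induction hh using Submodule.span_induction with
      | mem x hx =>
        obtain ⟨r, rfl⟩ := hx
        obtain ⟨r, rfl⟩ := hπs r
        intro c hcc s
        have h1 : c - g * r ∈ P := by rw [← hπ0]; simp [hcc]
        have h2 := hPz _ h1 s
        rw [mul_sub, ← mul_assoc _ g r, hc s] at h2
        simpa using h2
      | zero => intro c hcc s; exact hPz _ ((hπ0 c).1 hcc) s
      | add x y hx hy hx1 hy1 =>
        intro c hcc s
        obtain ⟨x, rfl⟩ := hπs x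
        obtain ⟨y, rfl⟩ := hπs y
        have h1 : c - (x + y) ∈ P := by rw [← hπ0]; simp [hcc]
        have h2 := hPz _ h1 s
        rw [mul_sub, mul_add, hx1 x rfl s, hy1 y rfl s] at h2
        simpa using h2
      | smul a x hx hx1 =>
        intro c hcc s
        obtain ⟨x, rfl⟩ := hπs x
        obtain ⟨a, rfl⟩ := hπs a
        have h1 : c - a * x ∈ P := by rw [← hπ0]; simp [hcc]
        have h2 := hPz _ h1 s
        rw [mul_sub, ← mul_assoc, mul_assoc _ s a, hx1 x rfl (s * a)] at h2
        simpa using h2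
    have h3 := key _ hhE c rfl 1
    rw [mul_one] at h3
    exact hne (Q_inj hP (hreg c hc0) (Ideal.mul_mem_left _ _ hx0) h3)
  set x := x0 * r with hx
  have hxQ : x ∈ lAnnI A (P : Set A) := Q_mul hx0
  have hzxg : z * (x * g) ≠ 0 := by rw [hx]; simpa only [mul_assoc] using hr
  have hxg : x * g ≠ 0 := by intro h; rw [h] at hzxg; simp at hzxg
  obtain ⟨b, hb1, hb2⟩ := jac_sing hP hz hxg
  have hgb : π (g * b) ≠ 0 := by
    intro h
    rw [hπ0] at h
    exact hb1 (by rw [mul_assoc]; exact hxQ _ h)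
  obtain ⟨d, hd⟩ := levitzki hsp hgb
  obtain ⟨d, rfl⟩ := hπs d
  rw [← map_mul] at hd
  set k0 := g * b * d with hk0
  have hpow : ∀ m, k0 ^ (m+1) ∉ P := by
    intro m hm
    rw [← hπ0, map_pow] at hm
    exact hd ⟨_, hm⟩
  have hlaQ : ∀ m y, y ∈ lAnnI A (P : Set A) → y * k0 ^ (m + 1) = 0 → y * g = 0 := by
    intro m y hy hy0
    have h1 := hgmax _ (hpow m) (by
      apply inf_le_inf_right
      rw [pow_succ', hk0, mul_assoc, mul_assoc]
      exact la_le_mul _ _)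
    have h2 : y ∈ la (k0 ^ (m+1)) ⊓ lAnnI A (P : Set A) := ⟨mem_la.2 hy0, hy⟩
    rw [h1] at h2
    exact mem_la.1 h2.1
  obtain ⟨n, hn1, hn⟩ := exists_pow_la (π k0)
  obtain ⟨m, rfl⟩ : ∃ m, n = m + 1 := ⟨n - 1, by omega⟩
  set k := k0 ^ (m + 1) with hk
  rw [← map_pow, ← hk] at hn
  obtain ⟨h, hh1, hh2⟩ := goldieG hsp (la (π k))
  obtain ⟨h, rfl⟩ := hπs h
  rw [mem_la, ← map_mul, hπ0] at hh1
  have hc0 : ∀ y : A ⧸ P, y * π (k + h) = 0 → y = 0 := by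
    intro y hy
    rw [map_add, mul_add] at hy
    have h1 : y * π k = 0 := by
      apply hn
      rw [← mul_assoc, eq_neg_of_add_eq_zero_left hy, neg_mul, mul_assoc, ← map_mul,
        (hπ0 _).2 hh1]
      simp
    apply hh2 y (mem_la.2 h1)
    rw [h1, zero_add] at hy; exact hy
  have hcreg := hreg _ hc0
  have hzxk : z * (x * k) = 0 := by
    have : x * k = x * g * b * (d * k0 ^ m) := by
      rw [hk, pow_succ', hk0]; simp only [mul_assoc]
    rw [this, ← mul_assoc, hb2, zero_mul]
  obtain ⟨y, hyQ, hy⟩ := Q_surj hP hcreg (Q_mul (r := k) hxQ)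
  have hzy : z * y = 0 := by
    apply Q_inj hP hcreg (Ideal.mul_mem_left _ _ hyQ)
    rw [mul_assoc, ← hy, hzxk]
  have hxy : x - y ∈ lAnnI A (P : Set A) := sub_mem hxQ hyQ
  have h1 : (x - y) * (k + h) = x * h := by
    rw [sub_mul, ← hy, mul_add]; abel
  have h2 : (x - y) * (k * k) = 0 := by
    have e1 : (x - y) * (k + h) * k = 0 := by rw [h1, mul_assoc]; exact hxQ _ hh1
    have e2 : (x - y) * (h * k) = 0 := hxy _ hh1
    rw [mul_assoc, add_mul, mul_add, e2, add_zero] at e1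
    exact e1
  have h3 : (x - y) * g = 0 := by
    apply hlaQ (m + 1 + m) _ hxy
    rw [← h2, hk, ← pow_add]
    congr 2
  apply hzxg
  have : x * g = y * g := by rw [sub_mul, sub_eq_zero] at h3; exact h3
  rw [this, ← mul_assoc, hzy, zero_mul]

theorem jac_nilpotent (hP : ∀ a x : A, (∀ u, a * u = 0 → x * u = 0) → ∃ s, x = s * a) :
    IsNilpotent (Ring.jacobson A) := by
  have main : ∀ I : Ideal A, (∀ x ∈ I, ∀ r, x * r ∈ I) →
      ∃ m : ℕ, m ≠ 0 ∧ ∀ j ∈ Ring.jacobson A ^ m, ∀ x ∈ lAnnI A (I : Set A), j * x = 0 := by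
    intro I
    induction I using (wellFounded_gt (α := Ideal A)).induction with
    | _ I ih =>
    intro hI
    by_cases hprime : ∀ a b, (∀ r, a * r * b ∈ I) → a ∈ I ∨ b ∈ I
    · have : I.IsTwoSided := ⟨fun b ha => hI _ ha b⟩
      refine ⟨1, one_ne_zero, fun j hj x hx => ?_⟩
      rw [Submodule.pow_one] at hj
      exact prime_case hP I hprime hj hx
    · push Not at hprime
      obtain ⟨a, b, hab, ha, hb⟩ := hprime
      let A' : Ideal A :=
        { carrier := {s | ∀ r, s * r * b ∈ I}
          add_mem' := by
            intro s t hs ht r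
            rw [add_mul, add_mul]; exact I.add_mem (hs r) (ht r)
          zero_mem' := by intro r; simp
          smul_mem' := by
            intro u s hs r
            have := I.mul_mem_left u (hs r)
            simpa only [smul_eq_mul, mul_assoc] using this }
      let B' : Ideal A :=
        { carrier := {t | ∀ s ∈ A', ∀ r, s * r * t ∈ I}
          add_mem' := by
            intro s t hs ht u hu r
            rw [mul_add]; exact I.add_mem (hs u hu r) (ht u hu r)
          zero_mem' := by intro r; simp
          smul_mem' := by
            intro u t ht s hs r
            have := ht s hs (r * u)
            simpa only [smul_eq_mul, mul_assoc] using this }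
      have hA : ∃ m : ℕ, m ≠ 0 ∧ ∀ j ∈ Ring.jacobson A ^ m, ∀ x ∈ lAnnI A (A' : Set A), j * x = 0 := by
        apply ih A'
        · refine lt_of_le_of_ne (fun s hs r => hI _ (hI _ hs _) _) (fun h => ha ?_)
          rw [h]; exact hab
        · intro s hs t r
          have := hs (t * r)
          simpa only [mul_assoc] using this
      have hB : ∃ m : ℕ, m ≠ 0 ∧ ∀ j ∈ Ring.jacobson A ^ m, ∀ x ∈ lAnnI A (B' : Set A), j * x = 0 := by
        apply ih B'
        · refine lt_of_le_of_ne (fun t ht s hs r => I.mul_mem_left _ ht) (fun h => hb ?_)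
          rw [h]; exact fun s hs r => hs r
        · intro t ht u s hs r
          have := hI _ (ht s hs r) u
          simpa only [mul_assoc] using this
      obtain ⟨m, hm0, hm⟩ := hA
      obtain ⟨n, hn0, hn⟩ := hB
      refine ⟨m + n, by omega, fun j hj x hx => ?_⟩
      have h1 : ∀ j ∈ Ring.jacobson A ^ n, j * x ∈ lAnnI A (A' : Set A) := by
        intro j hj s hs
        rw [mul_assoc]
        apply hn j hj
        intro t ht
        rw [mul_assoc]
        apply hx
        have := ht s hs 1
        simpa using this
      rw [Submodule.pow_add _ hn0] at hj
      induction hj using Submodule.mul_induction_on' with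
      | mem_mul_mem a ha b hb => rw [mul_assoc]; exact hm a ha _ (h1 b hb)
      | add a _ b _ ha hb => rw [add_mul, ha, hb, add_zero]
  obtain ⟨m, hm0, hm⟩ := main ⊥ (by simp)
  refine ⟨m, ?_⟩
  rw [Submodule.zero_eq_bot, eq_bot_iff]
  intro j hj
  have := hm j hj 1 (by intro x hx; simpa using hx)
  simpa using this

end Nilp
end NF

namespace NF
section PInj
variable {R : Type*} [Ring R]

lemma exists_factor {M N P : Type*} [AddCommGroup M] [AddCommGroup N] [AddCommGroup P]
    [Module R M] [Module R N] [Module R P] (g : M →ₗ[R] N) (h : M →ₗ[R] P)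
    (hle : ∀ m, g m = 0 → h m = 0) :
    ∃ f : LinearMap.range g →ₗ[R] P, ∀ m, f ⟨g m, LinearMap.mem_range_self g m⟩ = h m := by
  refine ⟨(LinearMap.ker g).liftQ h (fun m hm => hle m hm) ∘ₗ
    g.quotKerEquivRange.symm.toLinearMap, fun m => ?_⟩
  simp only [LinearMap.comp_apply, LinearEquiv.coe_coe]
  rw [LinearMap.quotKerEquivRange_symm_apply_image]
  exact Submodule.liftQ_apply _ _ _

lemma twoInj_elem (h : IsLeft2Injective R) (a b x y : R)
    (hxy : ∀ u v, u * a + v * b = 0 → u * x + v * y = 0) : ∃ c, x = a * c ∧ y = b * c := by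
  let g : R × R →ₗ[R] R := (LinearMap.toSpanSingleton R R a).coprod (LinearMap.toSpanSingleton R R b)
  let k : R × R →ₗ[R] R := (LinearMap.toSpanSingleton R R x).coprod (LinearMap.toSpanSingleton R R y)
  obtain ⟨f, hf⟩ := exists_factor g k (by rintro ⟨u, v⟩ h; simpa [k] using hxy u v (by simpa [g] using h))
  have hr : Submodule.span R ({a, b} : Set R) ≤ LinearMap.range g := by
    rw [Submodule.span_le]
    rintro z (rfl | rfl)
    · exact ⟨(1, 0), by simp [g]⟩
    · exact ⟨(0, 1), by simp [g]⟩
  obtain ⟨e, he⟩ := h a b (f ∘ₗ Submodule.inclusion hr)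
  have e1 : ∀ r, e r = r * e 1 := fun r => by
    rw [← smul_eq_mul, ← map_smul, smul_eq_mul, mul_one]
  have ha := he ⟨a, Submodule.subset_span (by simp)⟩
  have hb := he ⟨b, Submodule.subset_span (by simp)⟩
  have ha' := hf (1, 0)
  have hb' := hf (0, 1)
  simp only [g, k, LinearMap.coprod_apply, LinearMap.toSpanSingleton_apply, one_smul, zero_smul,
    add_zero, zero_add] at ha' hb'
  refine ⟨e 1, ?_, ?_⟩
  · rw [← e1, ha, ← ha']; rfl
  · rw [← e1, hb, ← hb']; rfl

lemma twoInj_P (h : IsLeft2Injective R) (a x : R) (hx : ∀ u, u * a = 0 → u * x = 0) :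
    ∃ s, x = a * s := by
  obtain ⟨c, hc, -⟩ := twoInj_elem h a 0 x 0 (by simpa using hx)
  exact ⟨c, hc⟩

lemma exists_compl' {I L : Ideal R} (hI : L ⊓ I = ⊥) :
    ∃ C : Ideal R, L ≤ C ∧ C ⊓ I = ⊥ ∧ ∀ C' : Ideal R, C ≤ C' → C' ⊓ I = ⊥ → C' = C := by
  obtain ⟨C, h1, h2⟩ := zorn_le_nonempty₀ {C : Ideal R | Disjoint C I} (by
    intro c hc hch y hy
    refine ⟨sSup c, ?_, fun z hz => le_sSup hz⟩
    rw [Set.mem_setOf_eq, DirectedOn.disjoint_sSup_left hch.directedOn]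
    exact fun z hz => hc hz) L (disjoint_iff.2 hI)
  refine ⟨C, h1, disjoint_iff.1 h2.prop, fun C' h h' => le_antisymm (h2.2 (disjoint_iff.2 h') h) h⟩

lemma jac_quot_semisimple [IsNoetherianRing R]
    (hinv : ∀ c : R, (∀ y, c * y ∈ Ring.jacobson R → y ∈ Ring.jacobson R) →
      ∃ d, 1 - d * c ∈ Ring.jacobson R) : IsSemisimpleRing (R ⧸ Ring.jacobson R) := by
  have : IsNoetherianRing (R ⧸ Ring.jacobson R) :=
    isNoetherianRing_of_surjective _ _ (Ideal.Quotient.mk _) Ideal.Quotient.mk_surjective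
  apply goldie_semisimple
  · intro a ha
    have : a ∈ Ring.jacobson (R ⧸ Ring.jacobson R) := by
      rw [mem_jac_iff]
      intro y
      have h2 : (y * a) * (y * a) = 0 := by
        rw [mul_assoc, ← mul_assoc a, ha, mul_zero]
      refine ⟨⟨1 - y * a, 1 + y * a, ?_, ?_⟩, rfl⟩
      · rw [sub_mul, mul_add, mul_add, h2]; simp
      · rw [add_mul, mul_sub, mul_sub, h2]; simp
    rw [Ring.jacobson_quotient_jacobson] at this
    simpa using this
  · intro c hc
    obtain ⟨c, rfl⟩ := Ideal.Quotient.mk_surjective c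
    obtain ⟨d, hd⟩ := hinv c (by
      intro y hy
      rw [← Ideal.Quotient.eq_zero_iff_mem] at hy ⊢
      rw [map_mul] at hy
      exact hc _ hy)
    refine ⟨Ideal.Quotient.mk _ d, ?_⟩
    rw [← Ideal.Quotient.eq_zero_iff_mem] at hd
    rw [map_sub, map_mul, map_one] at hd
    exact (sub_eq_zero.1 hd).symm

lemma nil_op (h : IsNilpotent (Ring.jacobson Rᵐᵒᵖ)) : IsNilpotent (Ring.jacobson R) := by
  have key : ∀ n : ℕ, ∀ j ∈ Ring.jacobson R ^ (n+1), MulOpposite.op j ∈ Ring.jacobson Rᵐᵒᵖ ^ (n+1) := by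
    intro n
    induction n with
    | zero => intro j hj; rw [zero_add, Submodule.pow_one] at hj ⊢; exact op_mem_jac.2 hj
    | succ n ih =>
      intro j hj
      rw [Submodule.pow_succ] at hj
      rw [Submodule.pow_succ' _ (by omega)]
      induction hj using Submodule.mul_induction_on' with
      | mem_mul_mem a ha b hb =>
        rw [MulOpposite.op_mul]; exact Submodule.mul_mem_mul (op_mem_jac.2 hb) (ih a ha)
      | add a _ b _ ha hb => rw [MulOpposite.op_add]; exact add_mem ha hb
  obtain ⟨n, hn⟩ := h
  refine ⟨n+1, ?_⟩
  rw [Submodule.zero_eq_bot, eq_bot_iff]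
  intro j hj
  have := key n j hj
  rw [Submodule.pow_succ, hn] at this
  simpa using this

lemma ss_op (h : IsSemisimpleRing (Rᵐᵒᵖ ⧸ Ring.jacobson Rᵐᵒᵖ)) :
    IsSemisimpleRing (R ⧸ Ring.jacobson R) := by
  rw [← isSemisimpleRing_mulOpposite_iff]
  let f : Rᵐᵒᵖ ⧸ Ring.jacobson Rᵐᵒᵖ →+* (R ⧸ Ring.jacobson R)ᵐᵒᵖ :=
    Ideal.Quotient.lift _ (RingHom.op (Ideal.Quotient.mk (Ring.jacobson R))) (by
      intro a ha
      have : a.unop ∈ Ring.jacobson R := by rw [← op_mem_jac]; exact ha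
      rw [← Ideal.Quotient.eq_zero_iff_mem] at this
      simp [this])
  refine RingHom.isSemisimpleRing_of_surjective f ?_
  intro x
  obtain ⟨y, hy⟩ := Ideal.Quotient.mk_surjective x.unop
  refine ⟨Ideal.Quotient.mk _ (MulOpposite.op y), ?_⟩
  simp [f, hy]

section
variable (hP : ∀ a x : R, (∀ u, u * a = 0 → u * x = 0) → ∃ s, x = a * s)
include hP

lemma hP_op (a x : Rᵐᵒᵖ) (h : ∀ u, a * u = 0 → x * u = 0) : ∃ s, x = s * a := by
  obtain ⟨s, hs⟩ := hP a.unop x.unop (fun u hu => by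
    have := h (MulOpposite.op u) (MulOpposite.unop_injective (by simpa using hu))
    simpa using congrArg MulOpposite.unop this)
  exact ⟨MulOpposite.op s, MulOpposite.unop_injective (by simpa using hs)⟩

lemma jac_sing_l {z : R} (hz : z ∈ Ring.jacobson R) : IsEssentialLIdeal R (la z) := by
  rw [ess_iff]
  intro x hx
  obtain ⟨r, h1, h2⟩ := jac_sing (hP_op hP) (op_mem_jac.2 hz) (x := MulOpposite.op x) (by simpa using hx)
  refine ⟨r.unop, ?_, ?_⟩
  · intro h; apply h1; apply MulOpposite.unop_injective; simpa using h
  · rw [mem_la]; simpa using congrArg MulOpposite.unop h2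

lemma sing_jac {z : R} (hz : IsEssentialLIdeal R (la z)) : z ∈ Ring.jacobson R := by
  rw [mem_jac_iff]
  have key : ∀ y, ∃ s, (1 - z * y) * s = 1 := by
    intro y
    obtain ⟨s, hs⟩ := hP (1 - z * y) 1 (fun u hu => by
      rw [mul_one]
      by_contra hne
      obtain ⟨r, hr, hr'⟩ := ess_iff.1 hz u hne
      rw [mem_la] at hr'
      have : r * (u * (1 - z * y)) = 0 := by rw [hu, mul_zero]
      apply hr
      rw [← mul_assoc, mul_sub, ← mul_assoc, hr'] at this
      simpa using this)
    exact ⟨s, hs.symm⟩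
  have hu : ∀ y, IsUnit (1 - z * y) := by
    intro y
    obtain ⟨s, hs⟩ := key y
    have : s = 1 - z * (- (y * s)) := by
      rw [sub_mul, one_mul] at hs
      rw [← hs]; noncomm_ring
    obtain ⟨t, ht⟩ := key (-(y*s))
    rw [← this] at ht
    have h3 : t = 1 - z * y := by
      calc t = ((1 - z * y) * s) * t := by rw [hs, one_mul]
        _ = _ := by rw [mul_assoc, ht, mul_one]
    rw [h3] at ht
    exact ⟨⟨_, s, hs, ht⟩, rfl⟩
  exact fun y => isUnit_one_sub_swap (hu y)

lemma back_inv (hC : ∀ C : Ideal R, IsComplementLeftIdeal R C → C ≠ ⊥ → ¬ IsSmallLeftIdeal R C)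
    (c : R) (hc : ∀ x, x * c ∈ Ring.jacobson R → x ∈ Ring.jacobson R) : ∃ d, c * d = 1 := by
  have hl : la c = ⊥ := by
    by_contra hne
    obtain ⟨E, -, hE, hE'⟩ := exists_compl' (I := la c) (L := ⊥) (by simp)
    obtain ⟨C, hC1, hC2, hC3⟩ := exists_compl' (I := E) (L := la c) (by rw [inf_comm]; exact hE)
    have hns := hC C ⟨E, hC2, hC3⟩ (fun h => hne (by rw [h] at hC1; exact le_bot_iff.1 hC1))
    have : ¬ C ≤ Ring.jacobson R := by
      intro hle
      apply hns
      intro K hK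
      by_contra hKne
      obtain ⟨M, hM, hKM⟩ := Ideal.exists_le_maximal K hKne
      apply hM.ne_top
      rw [eq_top_iff, ← hK]
      refine sup_le hKM (hle.trans ?_)
      rw [Ring.jacobson_eq_sInf_isMaximal]
      exact sInf_le hM
    obtain ⟨y, hyC, hyJ⟩ := Set.not_subset.1 this
    apply hyJ
    apply hc
    apply sing_jac hP
    rw [ess_iff]
    -- `la c` is essential in `C`
    have hess : ∀ x ∈ C, x ≠ 0 → ∃ r, r * x ≠ 0 ∧ r * x ∈ la c := by
      intro x hx hx0
      by_contra hcon
      push Not at hcon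
      have hd : Ideal.span {x} ⊓ la c = ⊥ := by
        rw [eq_bot_iff]
        rintro z ⟨hz1, hz2⟩
        obtain ⟨r, rfl⟩ := Ideal.mem_span_singleton'.1 hz1
        by_contra h0
        exact hcon r h0 hz2
      have hd2 : (E ⊔ Ideal.span {x}) ⊓ la c = ⊥ := by
        rw [eq_bot_iff]
        rintro z ⟨hz1, hz2⟩
        obtain ⟨e, he, w, hw, rfl⟩ := Submodule.mem_sup.1 hz1
        have hwC : w ∈ C := (Ideal.span_le.2 (Set.singleton_subset_iff.2 hx)) hw
        have heC : e ∈ C := by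
          have := C.sub_mem (hC1 hz2) hwC
          simpa using this
        have he0 : e ∈ C ⊓ E := ⟨heC, he⟩
        rw [hC2] at he0
        have he0' : e = 0 := by simpa using he0
        subst he0'
        rw [← hd]
        exact ⟨by simpa using hw, hz2⟩
      have := hE' _ le_sup_left hd2
      have hxE : x ∈ C ⊓ E := ⟨hx, by
        rw [← this]; exact Ideal.mem_sup_right (Ideal.mem_span_singleton_self x)⟩
      rw [hC2] at hxE
      exact hx0 (by simpa using hxE)
    have hEC : ∀ x : R, x ≠ 0 → ∃ r, r * x ≠ 0 ∧ r * x * y ∈ la c := by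
      intro x hx
      by_cases h : x * y = 0
      · exact ⟨1, by simpa using hx, by rw [one_mul, h]; exact zero_mem _⟩
      · obtain ⟨r, h1, h2⟩ := hess (x * y) (C.mul_mem_left _ hyC) h
        refine ⟨r, fun h0 => h1 (by rw [← mul_assoc, h0, zero_mul]), by rwa [mul_assoc]⟩
    intro x hx
    obtain ⟨r, h1, h2⟩ := hEC x hx
    exact ⟨r, h1, by rw [mem_la] at h2 ⊢; rwa [← mul_assoc]⟩
  obtain ⟨d, hd⟩ := hP c 1 (fun u hu => by
    have : u ∈ la c := mem_la.2 hu
    rw [hl] at this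
    simpa using this)
  exact ⟨d, hd.symm⟩

lemma back_semiprimary [IsNoetherianRing Rᵐᵒᵖ]
    (hC : ∀ C : Ideal R, IsComplementLeftIdeal R C → C ≠ ⊥ → ¬ IsSmallLeftIdeal R C) :
    IsSemiprimaryRing Rᵐᵒᵖ := by
  refine ⟨jac_quot_semisimple ?_, jac_nilpotent (hP_op hP)⟩
  intro c hc
  obtain ⟨d, hd⟩ := back_inv hP hC c.unop (by
    intro x hx
    rw [← op_mem_jac]
    apply hc
    rw [← op_mem_jac] at hx
    simpa using hx)
  refine ⟨MulOpposite.op d, ?_⟩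
  have : MulOpposite.op d * c = 1 := MulOpposite.unop_injective (by simpa using hd)
  rw [this, sub_self]; exact zero_mem _

end
end PInj
end NF

namespace NF
section Kasch
variable {R : Type*} [Ring R]

lemma jac_le {M : Ideal R} (hM : M.IsMaximal) : Ring.jacobson R ≤ M := by
  rw [Ring.jacobson_eq_sInf_isMaximal]; exact sInf_le hM

lemma jac_sock (hJ : IsNilpotent (Ring.jacobson R)) {x : R} (hx : x ≠ 0) :
    ∃ r, r * x ≠ 0 ∧ ∀ j ∈ Ring.jacobson R, j * (r * x) = 0 := by
  classical
  have hex : ∃ n : ℕ, ∀ j ∈ Ring.jacobson R ^ (n + 1), j * x = 0 := by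
    obtain ⟨n, hn⟩ := hJ
    refine ⟨n, fun j hj => ?_⟩
    rw [Submodule.pow_succ, hn] at hj
    have : j = 0 := by simpa using hj
    rw [this, zero_mul]
  have h1 := Nat.find_spec hex
  rcases hn : Nat.find hex with _ | m
  · refine ⟨1, by simpa using hx, fun j hj => ?_⟩
    rw [hn, zero_add, Submodule.pow_one] at h1
    rw [one_mul]; exact h1 j hj
  · have h2 := Nat.find_min hex (m := m) (by omega)
    push Not at h2
    obtain ⟨r, hr, hrx⟩ := h2
    refine ⟨r, hrx, fun j hj => ?_⟩
    rw [← mul_assoc]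
    apply h1
    rw [hn, Submodule.pow_succ' _ (by omega)]
    exact Submodule.mul_mem_mul hj hr

lemma fin_inter (s : Finset (Ideal R)) (hs : ∀ M ∈ s, M.IsMaximal) (N : Ideal R) (hN : N ≠ ⊤)
    (hle : s.inf id ≤ N) : ∃ M ∈ s, ∃ k, k ∉ N ∧ ∀ r ∈ M, r * k ∈ N := by
  classical
  induction s using Finset.induction_on with
  | empty => simp at hle; exact absurd hle hN
  | insert M s hM ih =>
    by_cases hK : s.inf id ≤ N
    · obtain ⟨M', h1, h2⟩ := ih (fun M hM => hs M (Finset.mem_insert_of_mem hM)) hK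
      exact ⟨M', Finset.mem_insert_of_mem h1, h2⟩
    · rw [Finset.inf_insert, id] at hle
      set K := s.inf id
      have hKM : ¬ K ≤ M := fun h => hK (by rwa [inf_eq_right.2 h] at hle)
      have hmax := hs M (Finset.mem_insert_self _ _)
      have htop : M ⊔ K = ⊤ := by
        apply hmax.1.2
        exact lt_of_le_of_ne le_sup_left (fun h => hKM (by rw [h]; exact le_sup_right))
      rw [Ideal.eq_top_iff_one] at htop
      obtain ⟨m, hm, k, hk, hmk⟩ := Submodule.mem_sup.1 htop
      refine ⟨M, Finset.mem_insert_self _ _, k, fun hkN => hK fun x hx => ?_, fun r hr => ?_⟩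
      · have e : x = x * m + x * k := by rw [← mul_add, hmk, mul_one]
        have h1 : x * m ∈ N := hle ⟨M.mul_mem_left _ hm, by
          have : x * m = x - x * k := by rw [eq_sub_iff_add_eq]; exact e.symm
          rw [this]; exact K.sub_mem hx (K.mul_mem_left _ hk)⟩
        rw [e]; exact N.add_mem h1 (N.mul_mem_left _ hkN)
      · refine hle ⟨?_, K.mul_mem_left _ hk⟩
        have e : r * k = r - r * m := by
          rw [eq_sub_iff_add_eq, add_comm, ← mul_add, hmk, mul_one]
        rw [e]; exact M.sub_mem hr (M.mul_mem_left _ hm)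

lemma exists_fin [IsSemisimpleRing (R ⧸ Ring.jacobson R)] :
    ∃ s : Finset (Ideal R), (∀ M ∈ s, M.IsMaximal) ∧ ∀ M : Ideal R, M.IsMaximal → s.inf id ≤ M := by
  classical
  obtain ⟨s, hs, h⟩ := exists_max (β := (Ideal (R ⧸ Ring.jacobson R))ᵒᵈ)
    (fun s : Finset (Ideal R) => ∀ M ∈ s, M.IsMaximal)
    (fun s => OrderDual.toDual (Ideal.map (Ideal.Quotient.mk (Ring.jacobson R)) (s.inf id)))
    ⟨∅, by simp⟩
  refine ⟨s, hs, fun M hM x hx => ?_⟩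
  have h1 := h (insert M s) (by
    intro M' hM'
    rcases Finset.mem_insert.1 hM' with rfl | h
    · exact hM
    · exact hs _ h) (by
    rw [OrderDual.toDual_le_toDual, Finset.inf_insert]
    exact Ideal.map_mono inf_le_right)
  have h1 := OrderDual.toDual_inj.1 h1
  have hx' := Ideal.mem_map_of_mem (Ideal.Quotient.mk (Ring.jacobson R)) hx
  rw [← h1, Ideal.mem_map_iff_of_surjective _ Ideal.Quotient.mk_surjective] at hx'
  obtain ⟨y, hy, hyx⟩ := hx'
  rw [Finset.inf_insert] at hy
  have hyM : y ∈ M := hy.1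
  have hJ := Ideal.Quotient.eq.1 hyx
  have := M.sub_mem hyM (jac_le hM hJ)
  simpa using this

lemma exists_idem [IsSemisimpleRing (R ⧸ Ring.jacobson R)] (hJ : IsNilpotent (Ring.jacobson R))
    (M : Ideal R) (hM : M.IsMaximal) :
    ∃ f : R, f * f = f ∧ f ≠ 0 ∧ ∀ r ∈ M, r * f ∈ Ring.jacobson R := by
  set q := Ideal.Quotient.mk (Ring.jacobson R)
  obtain ⟨N, hN⟩ := exists_isCompl (M.map q)
  have htop := hN.sup_eq_top
  rw [Ideal.eq_top_iff_one] at htop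
  obtain ⟨m, hm, e, he, hme⟩ := Submodule.mem_sup.1 htop
  have hMe : ∀ r ∈ M.map q, r * e = 0 := by
    intro r hr
    have h1 : r * e = r - r * m := by
      rw [eq_sub_iff_add_eq, add_comm, ← mul_add, hme, mul_one]
    have : r * e ∈ M.map q ⊓ N :=
      ⟨by rw [h1]; exact sub_mem hr (Ideal.mul_mem_left _ _ hm), Ideal.mul_mem_left _ _ he⟩
    rw [hN.inf_eq_bot] at this
    simpa using this
  have hee : IsIdempotentElem e := by
    have := hMe m hm
    have h2 : m = 1 - e := by rw [← hme]; abel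
    rw [h2, sub_mul, one_mul, sub_eq_zero] at this
    exact this.symm
  obtain ⟨f, hf, hfe⟩ := exists_isIdempotentElem_eq_of_ker_isNilpotent q (by
    intro x hx
    rw [Ideal.mk_ker] at hx
    obtain ⟨n, hn⟩ := hJ
    refine ⟨n + 1, ?_⟩
    have : ∀ k : ℕ, x ^ (k + 1) ∈ Ring.jacobson R ^ (k + 1) := by
      intro k
      induction k with
      | zero => rw [zero_add, Submodule.pow_one, pow_one]; exact hx
      | succ k ih => rw [pow_succ, Submodule.pow_succ]; exact Submodule.mul_mem_mul ih hx
    have := this n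
    rw [Submodule.pow_succ, hn] at this
    simpa using this) e (by
      obtain ⟨x, hx⟩ := Ideal.Quotient.mk_surjective e
      exact ⟨x, hx⟩) hee
  have key : ∀ r ∈ M, r * f ∈ Ring.jacobson R := by
    intro r hr
    rw [← Ideal.Quotient.eq_zero_iff_mem, map_mul]
    show q r * q f = 0
    rw [hfe]
    exact hMe _ (Ideal.mem_map_of_mem q hr)
  refine ⟨f, hf, ?_, key⟩
  rintro rfl
  rw [map_zero] at hfe
  rw [← hfe, add_zero] at hme
  rw [hme, Ideal.mem_map_iff_of_surjective _ Ideal.Quotient.mk_surjective] at hm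
  obtain ⟨x, hx, hx1⟩ := hm
  apply hM.ne_top
  rw [Ideal.eq_top_iff_one]
  rw [← map_one q] at hx1
  have := M.sub_mem hx (jac_le hM (Ideal.Quotient.eq.1 hx1))
  simpa using this

/-- equivalence of maximal left ideals -/
def Rel (M N : Ideal R) : Prop := ∃ u, u ∉ N ∧ ∀ r ∈ M, r * u ∈ N

lemma Rel.refl' {M : Ideal R} (hM : M.IsMaximal) : Rel M M :=
  ⟨1, fun h => hM.ne_top ((Ideal.eq_top_iff_one _).2 h), fun r hr => by simpa using hr⟩

lemma Rel.mem {M N : Ideal R} (hM : M.IsMaximal) {u : R} (hu : u ∉ N) (h : ∀ r ∈ M, r * u ∈ N)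
    {r : R} (hr : r * u ∈ N) : r ∈ M := by
  let K : Ideal R := Submodule.comap (LinearMap.toSpanSingleton R R u) N
  have hK : ∀ r, r ∈ K ↔ r * u ∈ N := fun r => by simp [K]
  have : M = K := hM.eq_of_le (fun h => hu (by
    have := (hK 1).1 (by rw [h]; trivial)
    simpa using this)) (fun r hr => (hK r).2 (h r hr))
  rw [this, hK]; exact hr

lemma Rel.symm' {M N : Ideal R} (hM : M.IsMaximal) (hN : N.IsMaximal) (h : Rel M N) : Rel N M := by
  obtain ⟨u, hu, h⟩ := h
  have htop : N ⊔ Ideal.span {u} = ⊤ := by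
    apply hN.1.2
    exact lt_of_le_of_ne le_sup_left (fun h => hu (by
      rw [h]; exact Ideal.mem_sup_right (Ideal.mem_span_singleton_self u)))
  rw [Ideal.eq_top_iff_one] at htop
  obtain ⟨m, hm, k, hk, hmk⟩ := Submodule.mem_sup.1 htop
  obtain ⟨v, rfl⟩ := Ideal.mem_span_singleton'.1 hk
  refine ⟨v, fun hv => hN.ne_top ((Ideal.eq_top_iff_one _).2 ?_), fun r hr => ?_⟩
  · rw [← hmk]; exact N.add_mem hm (h v hv)
  · apply Rel.mem hM hu h
    have : r * v * u = r - r * m := by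
      rw [mul_assoc, eq_sub_iff_add_eq, add_comm, ← mul_add, hmk, mul_one]
    rw [this]; exact N.sub_mem hr (N.mul_mem_left _ hm)

lemma Rel.trans' {M N L : Ideal R} (hN : N.IsMaximal)
    (h1 : Rel M N) (h2 : Rel N L) : Rel M L := by
  obtain ⟨u, hu, h⟩ := h1
  obtain ⟨v, hv, h'⟩ := h2
  refine ⟨u * v, fun huv => hu (Rel.mem hN hv h' huv), fun r hr => ?_⟩
  rw [← mul_assoc]; exact h' _ (h r hr)

theorem kasch (hP : ∀ a x : R, (∀ u, u * a = 0 → u * x = 0) → ∃ s, x = a * s)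
    [IsSemisimpleRing (R ⧸ Ring.jacobson R)] (hJ : IsNilpotent (Ring.jacobson R))
    (N : Ideal R) (hN : N.IsMaximal) : ∃ a, a ≠ 0 ∧ ∀ r ∈ N, r * a = 0 := by
  obtain ⟨s, hs, hs'⟩ := exists_fin (R := R)
  have hsJ : s.inf id ≤ Ring.jacobson R := by
    rw [Ring.jacobson_eq_sInf_isMaximal]; exact le_sInf fun M hM => hs' M hM
  let X := {M : Ideal R // M.IsMaximal}
  let S : Setoid X := ⟨fun M N => Rel M.1 N.1, fun M => Rel.refl' M.2,
    fun {M N} h => Rel.symm' M.2 N.2 h, fun {M N L} h h' => Rel.trans' N.2 h h'⟩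
  have hfin : Finite (Quotient S) := by
    have : Function.Surjective (fun M : s => (Quotient.mk S ⟨M.1, hs _ M.2⟩)) := by
      intro q
      induction q using Quotient.inductionOn with
      | _ M =>
      obtain ⟨M', h1, h2⟩ := fin_inter s hs M.1 M.2.ne_top (hs' _ M.2)
      exact ⟨⟨M', h1⟩, Quotient.sound h2⟩
    exact Finite.of_surjective _ this
  have ex : ∀ M : X, ∃ f a : R, f * f = f ∧ (∀ r ∈ M.1, r * f ∈ Ring.jacobson R) ∧
      a * f = a ∧ (la a).IsMaximal := by
    intro M
    obtain ⟨f, hf, hf0, hfJ⟩ := exists_idem hJ M.1 M.2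
    obtain ⟨r, hr, hr'⟩ := jac_sock hJ hf0
    obtain ⟨M', hM', k, hk, hk'⟩ := fin_inter s hs (la (r * f)) (by
      intro h
      rw [Ideal.eq_top_iff_one, mem_la, one_mul] at h
      exact hr h) (hsJ.trans fun j hj => mem_la.2 (hr' j hj))
    refine ⟨f, k * (r * f), hf, hfJ, by rw [mul_assoc, mul_assoc, hf], ?_⟩
    have : M' = la (k * (r * f)) := by
      apply (hs M' hM').eq_of_le
      · intro h
        rw [Ideal.eq_top_iff_one, mem_la, one_mul] at h
        exact hk (mem_la.2 h)
      · intro x hx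
        have := hk' x hx
        rw [mem_la] at this ⊢
        rwa [← mul_assoc]
    rw [← this]; exact hs M' hM'
  choose f a hff hfJ haf hmax using ex
  let F : Quotient S → Quotient S := fun q => Quotient.mk S ⟨la (a q.out), hmax _⟩
  have hinj : Function.Injective F := by
    intro p q hpq
    have hrel : Rel (la (a p.out)) (la (a q.out)) := Quotient.exact hpq
    obtain ⟨u, hu, hu'⟩ := hrel
    set P := p.out
    set Q := q.out
    rw [mem_la] at hu
    have e1 : ∀ r, r * a P = 0 ↔ r * (u * a Q) = 0 := by
      intro r
      rw [← mul_assoc, ← mem_la, ← mem_la]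
      exact ⟨hu' r, fun h => Rel.mem (hmax P) (by rwa [mem_la]) hu' h⟩
    obtain ⟨x, hx⟩ := hP _ _ (fun r => (e1 r).1)
    obtain ⟨y, hy⟩ := hP _ _ (fun r => (e1 r).2)
    have ha0 : a P ≠ 0 := by
      intro h; apply (hmax P).ne_top
      rw [Ideal.eq_top_iff_one, mem_la, h, mul_zero]
    have e2 : a P = a P * (x * (f Q * y * f P)) := by
      calc a P = a P * f P := (haf P).symm
        _ = u * a Q * y * f P := by rw [← hy]
        _ = u * (a Q * f Q) * y * f P := by rw [haf]
        _ = (u * a Q) * f Q * y * f P := by noncomm_ring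
        _ = _ := by rw [hx]; noncomm_ring
    have hnJ : f Q * y * f P ∉ Ring.jacobson R := by
      intro h
      have hunit := mem_jac_iff.1 h x
      apply ha0
      have : a P * (1 - x * (f Q * y * f P)) = 0 := by rw [mul_sub, mul_one, ← e2, sub_self]
      exact (hunit.mul_left_eq_zero).1 this
    have : Rel Q.1 P.1 := by
      refine ⟨f Q * y, fun h => hnJ (hfJ P _ h), fun r hr => ?_⟩
      rw [← mul_assoc]
      exact jac_le P.2 (Ideal.mul_mem_right _ _ (hfJ Q r hr))
    have h3 : Quotient.mk S Q = Quotient.mk S P := Quotient.sound this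
    rw [Quotient.out_eq, Quotient.out_eq] at h3
    exact h3.symm
  obtain ⟨q, hq⟩ := (Finite.injective_iff_surjective.1 hinj) (Quotient.mk S ⟨N, hN⟩)
  have hrel : Rel N (la (a q.out)) := Quotient.exact hq.symm
  obtain ⟨u, hu, hu'⟩ := hrel
  refine ⟨u * a q.out, fun h => hu (mem_la.2 h), fun r hr => ?_⟩
  rw [← mul_assoc]; exact mem_la.1 (hu' r hr)

theorem right_P (h2 : IsLeft2Injective R)
    (hK : ∀ N : Ideal R, N.IsMaximal → ∃ a, a ≠ 0 ∧ ∀ r ∈ N, r * a = 0)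
    (b a : R) (h : ∀ u, b * u = 0 → a * u = 0) : ∃ s, a = s * b := by
  by_contra hc
  let N0 : Ideal R := Submodule.comap (LinearMap.toSpanSingleton R R a) (Ideal.span {b})
  have hN0 : ∀ r, r ∈ N0 ↔ ∃ s, s * b = r * a := fun r => by
    simp only [N0, Submodule.mem_comap, LinearMap.toSpanSingleton_apply, smul_eq_mul]
    exact Ideal.mem_span_singleton'
  obtain ⟨N, hN, hle⟩ := Ideal.exists_le_maximal N0 (fun h => hc (by
    obtain ⟨s, hs⟩ := (hN0 1).1 (by rw [h]; trivial)
    exact ⟨s, by rw [hs, one_mul]⟩))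
  obtain ⟨k, hk, hk'⟩ := hK N hN
  obtain ⟨c, h1, h2⟩ := twoInj_elem h2 a b k 0 (fun u v huv => by
    rw [mul_zero, add_zero]
    apply hk' _ (hle ((hN0 u).2 ⟨-v, ?_⟩))
    rw [neg_mul]; exact (eq_neg_of_add_eq_zero_left huv).symm)
  exact hk (h1.trans (h c h2.symm))

end Kasch
end NF

namespace NF
section Len
variable {A B U : Type*} [Ring A] [Ring B] [AddCommGroup U] [Module A U] [Module B U]
  [SMulCommClass A B U]

/-- precomposition -/
def pre (A B U : Type*) [Ring A] [Ring B] [AddCommGroup U] [Module A U] [Module B U]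
    [SMulCommClass A B U] {X Y : Type*} [AddCommGroup X] [AddCommGroup Y] [Module A X] [Module A Y]
    (g : X →ₗ[A] Y) : (Y →ₗ[A] U) →ₗ[B] (X →ₗ[A] U) where
  toFun f := f ∘ₗ g
  map_add' f f' := by ext; simp
  map_smul' b f := by ext; simp

lemma len_exact {M : Type*} [AddCommGroup M] [Module A M] (N : Submodule A M) :
    Module.length B (M →ₗ[A] U) = Module.length B ((M ⧸ N) →ₗ[A] U) +
      Module.length B (LinearMap.range (pre A B U N.subtype)) := by
  refine Module.length_eq_add_of_exact (pre A B U N.mkQ) (pre A B U N.subtype).rangeRestrict ?_ ?_ ?_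
  · intro f g hfg
    ext x
    exact LinearMap.congr_fun hfg x
  · exact LinearMap.surjective_rangeRestrict _
  · intro f
    constructor
    · intro hf
      have hf' : ∀ x ∈ N, f x = 0 := by
        intro x hx
        have := congrArg Subtype.val hf
        exact LinearMap.congr_fun this ⟨x, hx⟩
      have hle : N ≤ LinearMap.ker f := fun x hx => hf' x hx
      refine ⟨N.liftQ f hle, ?_⟩
      ext x
      exact Submodule.liftQ_apply (h := hle) N f x
    · rintro ⟨g, rfl⟩
      apply Subtype.ext
      ext x
      show g (N.mkQ x) = 0
      rw [Submodule.mkQ_apply, (Submodule.Quotient.mk_eq_zero N).2 x.2, map_zero]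

lemma len_simple (hU : ∀ a x : U, (∀ r : A, r • a = 0 → r • x = 0) → ∃ b : B, x = b • a)
    {V : Type*} [AddCommGroup V] [Module A V] [IsSimpleModule A V] :
    Module.length B (V →ₗ[A] U) ≤ 1 := by
  cases subsingleton_or_nontrivial (V →ₗ[A] U) with
  | inl h => rw [Module.length_eq_zero]; exact zero_le_one
  | inr h =>
    have : IsSimpleModule B (V →ₗ[A] U) := by
      rw [isSimpleModule_iff_toSpanSingleton_surjective]
      refine ⟨h, fun f hf g => ?_⟩
      have : ∃ v, f v ≠ 0 := by
        by_contra hc; push Not at hc; exact hf (LinearMap.ext hc)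
      obtain ⟨v, hv⟩ := this
      have hv0 : v ≠ 0 := by rintro rfl; simp at hv
      have hinj : Function.Injective f := (LinearMap.injective_or_eq_zero f).resolve_right hf
      obtain ⟨b, hb⟩ := hU (f v) (g v) (fun r hr => by
        rw [← map_smul, ← map_zero f] at hr
        rw [← map_smul, hinj hr, map_zero])
      refine ⟨b, ?_⟩
      ext w
      obtain ⟨r, rfl⟩ := IsSimpleModule.toSpanSingleton_surjective A hv0 w
      simp only [LinearMap.toSpanSingleton_apply, LinearMap.smul_apply, map_smul]
      rw [hb, smul_comm r b]
    rw [Module.length_eq_one]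

lemma len_le (hU : ∀ a x : U, (∀ r : A, r • a = 0 → r • x = 0) → ∃ b : B, x = b • a)
    {X : Type*} [AddCommGroup X] [Module A X] (hX : IsFiniteLength A X) :
    Module.length B (X →ₗ[A] U) ≤ Module.length A X := by
  induction hX with
  | of_subsingleton =>
    rw [Module.length_eq_zero]; exact zero_le
  | @of_simple_quotient M _ _ N _ _ ih =>
    rw [len_exact N, Module.length_eq_add_of_exact N.subtype N.mkQ (Submodule.subtype_injective _)
      (Submodule.mkQ_surjective _) (LinearMap.exact_subtype_mkQ N), Module.length_eq_one A (M ⧸ N),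
      add_comm]
    refine add_le_add (le_trans ?_ ih) (len_simple hU)
    exact Module.length_le_of_injective _ (Submodule.subtype_injective _)

end Len

section Back
variable {R : Type*} [Ring R]

lemma len_op : Module.length Rᵐᵒᵖ R = Module.length Rᵐᵒᵖ Rᵐᵒᵖ := by
  refine (LinearEquiv.length_eq (LinearEquiv.ofBijective
    (LinearMap.toSpanSingleton Rᵐᵒᵖ R (1 : R)) ⟨?_, ?_⟩)).symm
  · intro x y h
    apply MulOpposite.unop_injective
    simpa using h
  · intro x
    exact ⟨MulOpposite.op x, by simp⟩

lemma len_right_le (hP : ∀ a x : R, (∀ u, u * a = 0 → u * x = 0) → ∃ s, x = a * s)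
    {X : Type*} [AddCommGroup X] [Module R X] (hX : IsFiniteLength R X) :
    Module.length Rᵐᵒᵖ (X →ₗ[R] R) ≤ Module.length R X := by
  apply len_le _ hX
  intro a x h
  obtain ⟨s, hs⟩ := hP a x h
  exact ⟨MulOpposite.op s, by simpa using hs⟩

lemma len_left_le (hP : ∀ a x : R, (∀ u, a * u = 0 → x * u = 0) → ∃ s, x = s * a)
    (hX : IsFiniteLength Rᵐᵒᵖ Rᵐᵒᵖ) :
    Module.length R R ≤ Module.length Rᵐᵒᵖ Rᵐᵒᵖ := by
  rw [← (LinearMap.ringLmapEquivSelf Rᵐᵒᵖ R R).length_eq]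
  apply len_le _ hX
  intro a x h
  obtain ⟨s, hs⟩ := hP a x (fun u hu => by simpa using h (MulOpposite.op u) (by simpa using hu))
  exact ⟨s, by simpa using hs⟩

lemma baer_of_P (hPl : ∀ a x : R, (∀ u, u * a = 0 → u * x = 0) → ∃ s, x = a * s)
    (hPr : ∀ a x : R, (∀ u, a * u = 0 → x * u = 0) → ∃ s, x = s * a)
    (hX : IsFiniteLength Rᵐᵒᵖ Rᵐᵒᵖ) : IsNoetherianRing R ∧ Module.Baer R R := by
  have h1 := len_left_le hPr hX
  have hfin : Module.length R R ≠ ⊤ := by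
    intro h
    rw [h, top_le_iff] at h1
    exact Module.length_ne_top_iff.2 hX h1
  have hfl := Module.length_ne_top_iff.1 hfin
  obtain ⟨hno, har⟩ := isFiniteLength_iff_isNoetherian_isArtinian.1 hfl
  refine ⟨hno, fun L g => ?_⟩
  have hflL : IsFiniteLength R L := isFiniteLength_iff_isNoetherian_isArtinian.2
    ⟨inferInstance, inferInstance⟩
  have hflQ : IsFiniteLength R (R ⧸ L) := isFiniteLength_iff_isNoetherian_isArtinian.2
    ⟨inferInstance, inferInstance⟩
  have e1 := len_exact (A := R) (B := Rᵐᵒᵖ) (U := R) L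
  rw [(LinearMap.ringLmapEquivSelf R Rᵐᵒᵖ R).length_eq, len_op] at e1
  have e2 := Module.length_eq_add_of_exact L.subtype L.mkQ (Submodule.subtype_injective _)
      (Submodule.mkQ_surjective _) (LinearMap.exact_subtype_mkQ L)
  have e3 := len_right_le hPl hflL
  have e4 := len_right_le hPl hflQ
  have hL := Module.length_ne_top_iff.2 hflL
  have hQ := Module.length_ne_top_iff.2 hflQ
  have hrange : LinearMap.range (pre R Rᵐᵒᵖ R (Submodule.subtype L)) = ⊤ := by
    by_contra hne
    have hfH : IsFiniteLength Rᵐᵒᵖ (L →ₗ[R] R) := Module.length_ne_top_iff.1 (by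
      intro h; rw [h, top_le_iff] at e3; exact hL e3)
    obtain ⟨_, _⟩ := isFiniteLength_iff_isNoetherian_isArtinian.1 hfH
    have hlt := Submodule.length_lt hne
    have hlt2 := lt_of_lt_of_le hlt e3
    rw [e1, e2, add_comm] at h1
    have h5 := h1.trans (add_le_add_left e4 _)
    have h6 := (ENat.add_le_add_iff_left hQ).1 h5
    exact absurd hlt2 (not_lt.2 h6)
  obtain ⟨f, hf⟩ : g ∈ LinearMap.range (pre R Rᵐᵒᵖ R (Submodule.subtype L)) := by
    rw [hrange]; trivial
  refine ⟨f, fun x hx => ?_⟩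
  rw [← hf]; rfl

theorem backward (hno : IsNoetherianRing Rᵐᵒᵖ) (h2 : IsLeft2Injective R)
    (hC : ∀ C : Ideal R, IsComplementLeftIdeal R C → C ≠ ⊥ → ¬ IsSmallLeftIdeal R C) :
    IsNoetherianRing R ∧ Module.Baer R R := by
  have hPl := twoInj_P h2
  have hsp := back_semiprimary hPl hC
  have har : IsArtinianRing Rᵐᵒᵖ := IsSemiprimaryRing.isNoetherian_iff_isArtinian.1 hno
  have hss : IsSemisimpleRing (R ⧸ Ring.jacobson R) := ss_op hsp.1
  have hnil := nil_op hsp.2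
  have hPr := right_P h2 (kasch hPl hnil)
  exact baer_of_P hPl hPr (isFiniteLength_iff_isNoetherian_isArtinian.2 ⟨hno, har⟩)

end Back
end NF

namespace NF
section Fwd
variable {R : Type*} [Ring R]

lemma baer_ext (hB : Module.Baer R R) (I : Ideal R) (g : I →ₗ[R] R) :
    ∃ c, ∀ x (hx : x ∈ I), g ⟨x, hx⟩ = x * c := by
  obtain ⟨g', hg'⟩ := hB I g
  refine ⟨g' 1, fun x hx => ?_⟩
  rw [← hg' x hx, ← smul_eq_mul, ← map_smul, smul_eq_mul, mul_one]

lemma baer_two (hB : Module.Baer R R) : IsLeft2Injective R := by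
  intro a b f
  obtain ⟨g, hg⟩ := hB _ f
  exact ⟨g, fun x => hg x.1 x.2⟩

lemma baer_factor (hB : Module.Baer R R) {M : Type*} [AddCommGroup M] [Module R M]
    (g h : M →ₗ[R] R) (hle : ∀ m, g m = 0 → h m = 0) : ∃ c, ∀ m, h m = g m * c := by
  obtain ⟨f, hf⟩ := exists_factor g h hle
  obtain ⟨c, hc⟩ := baer_ext hB _ f
  exact ⟨c, fun m => by rw [← hf, hc]⟩

lemma fwd_inv (hB : Module.Baer R R) (a : R) : ∃ c, a - a * c * a ∈ Ring.jacobson R := by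
  obtain ⟨D, -, h1, h2⟩ := exists_compl' (I := la a) (L := ⊥) (by simp)
  obtain ⟨c, hc⟩ := baer_factor hB (LinearMap.toSpanSingleton R R a ∘ₗ D.subtype) D.subtype (by
    intro m hm
    have : m.1 ∈ D ⊓ la a := ⟨m.2, mem_la.2 (by simpa using hm)⟩
    rw [h1] at this
    simpa using this)
  refine ⟨c, sing_jac (twoInj_P (baer_two hB)) ?_⟩
  have hle : la a ⊔ D ≤ la (a - a * c * a) := by
    refine sup_le (fun x hx => ?_) (fun x hx => ?_)
    · rw [mem_la] at hx ⊢
      rw [mul_sub, mul_assoc a c a, ← mul_assoc x a, hx]; simp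
    · have := hc ⟨x, hx⟩
      simp only [LinearMap.comp_apply, Submodule.subtype_apply, LinearMap.toSpanSingleton_apply,
        smul_eq_mul] at this
      rw [mem_la, mul_sub, ← mul_assoc, ← mul_assoc, ← this, sub_self]
  intro K hK
  have hK' : K ⊓ (la a ⊔ D) = ⊥ := le_bot_iff.1 (hK ▸ inf_le_inf_left K hle)
  have h3 : (D ⊔ K) ⊓ la a = ⊥ := by
    rw [eq_bot_iff]
    rintro x ⟨hx1, hx2⟩
    obtain ⟨d, hd, k, hk, rfl⟩ := Submodule.mem_sup.1 hx1
    have hk0 : k ∈ K ⊓ (la a ⊔ D) := by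
      refine ⟨hk, ?_⟩
      have := sub_mem (Ideal.mem_sup_left hx2 : d + k ∈ la a ⊔ D) (Ideal.mem_sup_right hd)
      simpa using this
    rw [hK'] at hk0
    have hk0 : k = 0 := by simpa using hk0
    subst hk0
    rw [← h1]
    exact ⟨by simpa using hd, hx2⟩
  have h4 : K ≤ D := by rw [← h2 _ le_sup_left h3]; exact le_sup_right
  rw [eq_bot_iff, ← hK']
  exact le_inf le_rfl (h4.trans le_sup_right)

lemma fwd_nil [IsNoetherianRing R] (hB : Module.Baer R R) : IsNilpotent (Ring.jacobson R) := by
  let U : ℕ → Ideal R := fun n => lAnnI R ((Ring.jacobson R ^ (n + 1) : Ideal R) : Set R)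
  have hU : ∀ n x, x ∈ U n ↔ ∀ j ∈ Ring.jacobson R ^ (n + 1), x * j = 0 := fun n x => Iff.rfl
  obtain ⟨n, hn⟩ := exists_stab U (fun n x hx => by
    rw [hU] at hx ⊢
    intro j hj
    apply hx
    rw [Submodule.pow_succ' _ (by omega)] at hj
    induction hj using Submodule.mul_induction_on' with
    | mem_mul_mem a ha b hb => exact Ideal.mul_mem_left _ _ hb
    | add a _ b _ ha hb => exact add_mem ha hb)
  by_cases h1 : (1 : R) ∈ U n
  · refine ⟨n + 1, ?_⟩
    rw [Submodule.zero_eq_bot, eq_bot_iff]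
    intro j hj
    have := (hU _ _).1 h1 j hj
    simpa using this
  · exfalso
    obtain ⟨a, ha, hmax⟩ := exists_max (fun a : R => a ∉ U n) la ⟨1, h1⟩
    have : ∃ z ∈ Ring.jacobson R, a * z ∉ U n := by
      by_contra hc
      push Not at hc
      apply ha
      rw [← hn (n + 1) (by omega), hU]
      intro j hj
      rw [Submodule.pow_succ' _ (by omega)] at hj
      induction hj using Submodule.mul_induction_on' with
      | mem_mul_mem x hx b hb => rw [← mul_assoc]; exact (hU _ _).1 (hc x hx) b hb
      | add x _ b _ hx hb => rw [mul_add, hx, hb, add_zero]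
    obtain ⟨z, hz, haz⟩ := this
    have hla := hmax _ haz (la_le_mul a z)
    obtain ⟨r, hr, hr'⟩ := ess_iff.1 (jac_sing_l (twoInj_P (baer_two hB)) hz) a (by
      rintro rfl; exact ha (zero_mem _))
    apply hr
    rw [← mem_la, ← hla, mem_la, ← mul_assoc]
    exact mem_la.1 hr'

lemma fwd_noeth [IsNoetherianRing R] (hB : Module.Baer R R) : IsNoetherianRing Rᵐᵒᵖ := by
  have hss : IsSemisimpleRing (R ⧸ Ring.jacobson R) := by
    apply jac_quot_semisimple
    intro c hc
    obtain ⟨d, hd⟩ := fwd_inv hB c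
    refine ⟨d, hc _ ?_⟩
    rw [mul_sub, mul_one, ← mul_assoc]; exact hd
  have hsp : IsSemiprimaryRing R := ⟨hss, fwd_nil hB⟩
  have har : IsArtinianRing R := IsSemiprimaryRing.isNoetherian_iff_isArtinian.1 ‹_›
  have hfl : IsFiniteLength R R := isFiniteLength_iff_isNoetherian_isArtinian.2 ⟨‹_›, har⟩
  have h1 := len_right_le (twoInj_P (baer_two hB)) hfl
  rw [(LinearMap.ringLmapEquivSelf R Rᵐᵒᵖ R).length_eq, len_op] at h1
  have h2 : IsFiniteLength Rᵐᵒᵖ Rᵐᵒᵖ := Module.length_ne_top_iff.1 (fun h => by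
    rw [h, top_le_iff] at h1
    exact Module.length_ne_top_iff.2 hfl h1)
  exact (isFiniteLength_iff_isNoetherian_isArtinian.1 h2).1

lemma fwd_compl (hB : Module.Baer R R) (C : Ideal R) (hC : IsComplementLeftIdeal R C)
    (hC0 : C ≠ ⊥) : ¬ IsSmallLeftIdeal R C := by
  intro hsmall
  obtain ⟨S, hS, hmax⟩ := hC
  obtain ⟨S', h1, h2, h3⟩ := exists_compl' (I := C) (L := S) (by rw [inf_comm]; exact hS)
  have hmax' : ∀ C' : Ideal R, C ≤ C' → C' ⊓ S' = ⊥ → C' = C := fun C' h h' =>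
    hmax C' h (le_bot_iff.1 (h' ▸ inf_le_inf_left C' h1))
  have hdis : ∀ x, x ∈ S' → x ∈ C → x = 0 := fun x hx hx' => by
    have : x ∈ S' ⊓ C := ⟨hx, hx'⟩
    rw [h2] at this
    simpa using this
  obtain ⟨t, ht⟩ := baer_factor hB (C.subtype.coprod S'.subtype)
    (C.subtype ∘ₗ LinearMap.fst R C S') (by
    rintro ⟨c, s⟩ h
    simp only [LinearMap.coprod_apply, Submodule.subtype_apply] at h
    simp only [LinearMap.comp_apply, LinearMap.fst_apply, Submodule.subtype_apply]
    apply hdis _ _ c.2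
    rw [eq_neg_of_add_eq_zero_left h]; exact neg_mem s.2)
  have hct : ∀ c ∈ C, c * t = c := fun c hc => by
    have := ht (⟨c, hc⟩, 0)
    simpa using this.symm
  have hst : ∀ s ∈ S', s * t = 0 := fun s hs => by
    have := ht (0, ⟨s, hs⟩)
    simpa using this.symm
  have hT : ∀ r, r * t ∈ S' → r ∈ S' := by
    let T : Ideal R := Submodule.comap (LinearMap.toSpanSingleton R R t) S'
    have hTm : ∀ r, r ∈ T ↔ r * t ∈ S' := fun r => by simp [T]
    have : T = S' := by
      apply h3
      · intro s hs
        rw [hTm, hst s hs]; exact zero_mem _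
      · rw [eq_bot_iff]
        rintro c ⟨hc1, hc2⟩
        have := (hTm c).1 hc1
        rw [hct c hc2] at this
        simpa using hdis c this hc2
    intro r hr
    rw [← this, hTm]; exact hr
  have hRt : Ideal.span {t} = C := by
    apply hmax'
    · intro c hc
      rw [← hct c hc]
      exact Ideal.mul_mem_left _ _ (Ideal.mem_span_singleton_self t)
    · rw [eq_bot_iff]
      rintro x ⟨hx1, hx2⟩
      obtain ⟨r, rfl⟩ := Ideal.mem_span_singleton'.1 hx1
      simpa using hst r (hT r hx2)
  have htC : t ∈ C := by rw [← hRt]; exact Ideal.mem_span_singleton_self t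
  have htop := hsmall (Ideal.span {1 - t}) (by
    rw [Ideal.eq_top_iff_one]
    have := add_mem (Ideal.mem_sup_left (Ideal.mem_span_singleton_self (1 - t)) :
      1 - t ∈ Ideal.span {1 - t} ⊔ C) (Ideal.mem_sup_right htC)
    simpa using this)
  rw [Ideal.eq_top_iff_one] at htop
  obtain ⟨r, hr⟩ := Ideal.mem_span_singleton'.1 htop
  have ht0 : t = 0 := by
    calc t = r * (1 - t) * t := by rw [hr, one_mul]
      _ = r * (t - t * t) := by noncomm_ring
      _ = 0 := by rw [hct t htC, sub_self, mul_zero]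
  apply hC0
  rw [← hRt, ht0]
  simp

end Fwd
end NF

/-- `R` is QF iff `R` is right noetherian, left 2-injective and every nonzero
complement left ideal is not small. -/
theorem stmt7 (R : Type*) [Ring R] :
    IsQuasiFrobenius R ↔
      (IsNoetherianRing Rᵐᵒᵖ ∧ IsLeft2Injective R ∧
        ∀ C : Ideal R, IsComplementLeftIdeal R C → C ≠ ⊥ → ¬ IsSmallLeftIdeal R C) := by
  constructor
  · rintro ⟨hn, hi⟩
    have hB := Module.Baer.of_injective hi
    exact ⟨NF.fwd_noeth hB, NF.baer_two hB, NF.fwd_compl hB⟩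
  · rintro ⟨hn, h2, hC⟩
    obtain ⟨h1, hB⟩ := NF.backward hn h2 hC
    exact ⟨h1, hB.injective⟩
end

section
/- If R is right noetherian and left FP-injective, then R is quasi-Frobenius if and only if every nonzero complement left ideal of R is not small. -/
section Helpers
variable {R : Type*} [Ring R]

theorem aux_noeth [IsNoetherianRing Rᵐᵒᵖ] : IsNoetherian Rᵐᵒᵖ R := by
  let e : Rᵐᵒᵖ →ₗ[Rᵐᵒᵖ] R :=
    { toFun := fun r => r.unop
      map_add' := fun a b => rfl
      map_smul' := fun a b => rfl }
  exact isNoetherian_of_surjective (f := e)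
    (LinearMap.range_eq_top.2 (fun r => ⟨MulOpposite.op r, rfl⟩))

theorem aux_FM (hFP : IsLeftFPInjective R) (n : ℕ) (a b : Fin n → R)
    (h : ∀ u : Fin n → R, ∑ i, u i * a i = 0 → ∑ i, u i * b i = 0) :
    ∃ c : R, ∀ i, b i = a i * c := by
  rcases n with _ | n
  · exact ⟨0, fun i => i.elim0⟩
  have key := (hFP (n+1) (Matrix.of fun i j => if j = 0 then a i else 0)
    (Matrix.of fun i j => if j = 0 then b i else 0)).1 (by
      intro U hU
      ext k j
      have h1 := congrFun (congrFun hU k) 0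
      simp only [Matrix.mul_apply, Matrix.of_apply, if_true, Matrix.zero_apply] at h1 ⊢
      by_cases hj : j = 0
      · simpa [hj] using h (U k) h1
      · simp [hj])
  obtain ⟨S, hS⟩ := key
  refine ⟨S 0 0, fun i => ?_⟩
  have h1 := congrFun (congrFun hS i) 0
  simpa [Matrix.mul_apply] using h1

theorem aux_P (hFP : IsLeftFPInjective R) (a x : R) (h : ∀ u, u * a = 0 → u * x = 0) :
    ∃ s, x = a * s := by
  obtain ⟨c, hc⟩ := aux_FM hFP 1 (fun _ => a) (fun _ => x) (by
    intro u; simpa using h (u 0))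
  exact ⟨c, hc 0⟩

theorem aux_rmem (T : RIdeal R) {x : R} (hx : x ∈ T) (s : R) : x * s ∈ T :=
  T.smul_mem (MulOpposite.op s) hx

theorem aux_ann_fin (hFP : IsLeftFPInjective R) (n : ℕ) (t : Fin n → R) (x : R)
    (h : ∀ u, (∀ i, u * t i = 0) → u * x = 0) : ∃ s : Fin n → R, x = ∑ i, t i * s i := by
  rcases n with _ | n
  · refine ⟨fun _ => 0, ?_⟩
    have := h 1 (fun i => i.elim0)
    simpa using this
  have key := (hFP (n+1) (Matrix.of fun i j => if i = 0 then t j else 0)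
    (Matrix.of fun i j => if i = 0 then (if j = 0 then x else 0) else 0)).1 (by
      intro U hU
      ext k j
      have h1 : ∀ j, U k 0 * t j = 0 := by
        intro j
        have h1 := congrFun (congrFun hU k) j
        simpa [Matrix.mul_apply] using h1
      have h2 := h _ h1
      by_cases hj : j = 0
      · simpa [Matrix.mul_apply, hj] using h2
      · simp [Matrix.mul_apply, hj])
  obtain ⟨S, hS⟩ := key
  refine ⟨fun i => S i 0, ?_⟩
  have h1 := congrFun (congrFun hS 0) 0
  simpa [Matrix.mul_apply] using h1

theorem aux_ann [IsNoetherianRing Rᵐᵒᵖ] (hFP : IsLeftFPInjective R) (T : RIdeal R) (x : R)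
    (h : ∀ u, (∀ t ∈ T, u * t = 0) → u * x = 0) : x ∈ T := by
  have := aux_noeth (R := R)
  obtain ⟨n, t, ht⟩ := Submodule.fg_iff_exists_fin_generating_family.1 (IsNoetherian.noetherian T)
  obtain ⟨s, hs⟩ := aux_ann_fin hFP n t x (by
    intro u hu
    apply h
    intro y hy
    rw [← ht] at hy
    induction hy using Submodule.span_induction with
    | mem y hy => obtain ⟨i, rfl⟩ := hy; exact hu i
    | zero => simp
    | add a b _ _ ha hb => rw [mul_add, ha, hb, add_zero]
    | smul c a _ ha =>
      show u * (a * c.unop) = 0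
      rw [← mul_assoc, ha, zero_mul])
  rw [hs]
  refine Submodule.sum_mem _ (fun i _ => aux_rmem T ?_ _)
  rw [← ht]; exact Submodule.subset_span ⟨i, rfl⟩

/-- disjoint cyclic left ideals have comaximal annihilators -/
theorem aux_disj (hFP : IsLeftFPInjective R) (y z : R)
    (h : ∀ u v, u * y = v * z → u * y = 0) : ∃ c, y * c = y ∧ z * c = 0 := by
  obtain ⟨c, hc⟩ := aux_FM hFP 2 ![y, z] ![y, 0] (by
    intro u hu
    simp [Fin.sum_univ_two] at hu ⊢
    apply h (u 0) (- u 1)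
    rw [neg_mul]; exact eq_neg_of_add_eq_zero_left hu)
  exact ⟨c, (hc 0).symm, (hc 1).symm⟩

theorem jac_unit {j : R} (hj : j ∈ Ring.jacobson R) : ∃ s, (1 - j) * s = 1 ∧ s * (1 - j) = 1 := by
  have main : ∀ x ∈ Ring.jacobson R, ∃ z, z * (1 - x) = 1 := by
    intro x hx
    rw [← Ideal.jacobson_bot, Ideal.mem_jacobson_iff] at hx
    obtain ⟨z, hz⟩ := hx (-1)
    refine ⟨z, ?_⟩
    have : z * -1 * x + z - 1 = 0 := hz
    rw [← sub_eq_zero, ← this]; noncomm_ring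
  obtain ⟨z, hz⟩ := main j hj
  obtain ⟨w, hw⟩ := main (-(z * j)) (neg_mem (Ideal.mul_mem_left _ _ hj))
  have h1 : 1 - -(z * j) = z := by
    rw [mul_sub, mul_one, sub_eq_iff_eq_add] at hz
    rw [sub_neg_eq_add]; exact hz.symm
  rw [h1] at hw
  have h2 : w = 1 - j := by
    calc w = w * (z * (1 - j)) := by rw [hz, mul_one]
      _ = 1 - j := by rw [← mul_assoc, hw, one_mul]
  exact ⟨z, h2 ▸ hw, hz⟩

theorem jac_of_right {a : R} (h : ∀ r, ∃ s, (1 - a * r) * s = 1) : a ∈ Ring.jacobson R := by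
  rw [← Ideal.jacobson_bot, Ideal.mem_jacobson_iff]
  intro y
  obtain ⟨s, hs⟩ := h (-y)
  obtain ⟨s', hs'⟩ := h (y * s)
  -- s = 1 - a y s
  have h1 : 1 - a * (y * s) = s := by
    rw [← hs]; noncomm_ring
  rw [h1] at hs'
  have h2 : s' = 1 - a * -y := by
    calc s' = (1 - a * -y) * s * s' := by rw [hs, one_mul]
      _ = 1 - a * -y := by rw [mul_assoc, hs', mul_one]
  rw [h2] at hs'
  -- s (1 + a y) = 1
  refine ⟨1 - y * s * a, ?_⟩
  have h3 : s + s * (a * y) = 1 := by rw [← hs']; noncomm_ring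
  have h4 : y * (s + s * (a * y)) * a = y * a := by rw [h3, mul_one]
  show (1 - y * s * a) * y * a + (1 - y * s * a) - 1 = 0
  have : (1 - y * s * a) * y * a + (1 - y * s * a) - 1 = y * a - y * (s + s * (a * y)) * a := by
    noncomm_ring
  rw [this, h4, sub_self]

/-- `a ∉ J` implies the left annihilator of `a` is not essential. -/
theorem jac_sing (hFP : IsLeftFPInjective R) {a : R}
    (h : ∀ b, (∀ u, u * b * a = 0 → u * b = 0) → b = 0) : a ∈ Ring.jacobson R := by
  apply jac_of_right
  intro r
  obtain ⟨s, hs⟩ := aux_P hFP (1 - a * r) 1 (by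
    intro u hu
    rw [mul_one]
    apply h
    intro v hv
    have : v * (u * (1 - a * r)) = 0 := by rw [hu, mul_zero]
    have h2 : v * (u * (1 - a * r)) = v * u - v * u * a * r := by noncomm_ring
    rw [h2, hv, zero_mul, sub_zero] at this
    exact this)
  exact ⟨s, hs.symm⟩

theorem sing_jac (hFP : IsLeftFPInjective R) {a b : R} (ha : a ∈ Ring.jacobson R)
    (hb : ∀ u, u * b * a = 0 → u * b = 0) : b = 0 := by
  obtain ⟨s, hs⟩ := aux_P hFP (b * a) b (by intro u hu; apply hb; rw [mul_assoc]; exact hu)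
  obtain ⟨t, ht, -⟩ := jac_unit (Ideal.mul_mem_right s _ ha)
  have : b * (1 - a * s) = 0 := by rw [mul_sub, mul_one, ← mul_assoc, ← hs, sub_self]
  calc b = b * ((1 - a * s) * t) := by rw [ht, mul_one]
    _ = 0 := by rw [← mul_assoc, this, zero_mul]

theorem exists_compl (S C : Ideal R) (h : C ⊓ S = ⊥) :
    ∃ D : Ideal R, C ≤ D ∧ D ⊓ S = ⊥ ∧ ∀ C' : Ideal R, D ≤ C' → C' ⊓ S = ⊥ → C' = D := by
  obtain ⟨m, hm, hmax⟩ := zorn_le_nonempty₀ {D : Ideal R | D ⊓ S = ⊥} (by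
    intro c hc hch y hy
    refine ⟨sSup c, ?_, fun z hz => le_sSup hz⟩
    show sSup c ⊓ S = ⊥
    rw [eq_bot_iff]
    rintro x ⟨hx, hxS⟩
    obtain ⟨D, hD, hxD⟩ := (Submodule.mem_sSup_of_directed ⟨y, hy⟩ hch.directedOn).1 hx
    rw [← (hc hD : D ⊓ S = ⊥)]
    exact ⟨hxD, hxS⟩) C h
  exact ⟨m, hm, hmax.1, fun C' h1 h2 => le_antisymm (hmax.2 h2 h1) h1⟩

/-- small left ideals: contained in J implies small -/
theorem small_of_le_jac (C : Ideal R) (h : C ≤ Ring.jacobson R) : IsSmallLeftIdeal R C := by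
  intro K hK
  have h1 : (1 : R) ∈ K ⊔ C := by rw [hK]; trivial
  obtain ⟨k, hk, c, hc, hkc⟩ := Submodule.mem_sup.1 h1
  obtain ⟨s, -, hs⟩ := jac_unit (h hc)
  rw [Ideal.eq_top_iff_one, ← hs]
  apply K.mul_mem_left
  rw [← hkc]; simpa using hk

theorem qf_dir (hQ : IsQuasiFrobenius R) (C : Ideal R) (hC : IsComplementLeftIdeal R C)
    (h0 : C ≠ ⊥) : ¬ IsSmallLeftIdeal R C := by
  obtain ⟨S, hCS, hmax⟩ := hC
  obtain ⟨V, hSV, hVC, hVmax⟩ := exists_compl C S (by rw [inf_comm]; exact hCS)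
  have hinj := hQ.2
  obtain ⟨φ, hφ⟩ := hinj.out (LinearMap.coprod C.subtype V.subtype) (by
    rw [← LinearMap.ker_eq_bot, LinearMap.ker_eq_bot']
    rintro ⟨⟨c, hc⟩, ⟨v, hv⟩⟩ h
    simp at h
    have h1 : v ∈ V ⊓ C := ⟨hv, by rw [← neg_eq_of_add_eq_zero_right h]; exact neg_mem hc⟩
    rw [hVC] at h1
    have h2 : v = 0 := h1
    subst h2
    simp at h
    subst h
    rfl) (LinearMap.coprod C.subtype (0 : V →ₗ[R] R))
  have hc : ∀ c ∈ C, c * φ 1 = c := by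
    intro c hc
    have := hφ (⟨c, hc⟩, 0)
    simp at this
    rw [← smul_eq_mul, ← map_smul, smul_eq_mul, mul_one, this]
  have hv : ∀ v ∈ V, v * φ 1 = 0 := by
    intro v hv
    have := hφ (0, ⟨v, hv⟩)
    simp at this
    rw [← smul_eq_mul, ← map_smul, smul_eq_mul, mul_one, this]
  set e := φ 1
  have hCe : Ideal.span {e} = C := by
    apply hmax
    · intro c hcc
      rw [← hc c hcc]
      exact Ideal.mul_mem_left _ _ (Ideal.subset_span rfl)
    · rw [eq_bot_iff]
      rintro s ⟨hs, hsS⟩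
      obtain ⟨u, rfl⟩ := Ideal.mem_span_singleton'.1 hs
      by_contra hne
      have huV : u ∉ V := fun h => hne (hv u h)
      have : ¬ ((V ⊔ Ideal.span {u}) ⊓ C = ⊥) := by
        intro h
        have := hVmax _ le_sup_left h
        apply huV
        rw [← this]
        exact Ideal.mem_sup_right (Ideal.subset_span rfl)
      rw [Submodule.eq_bot_iff] at this
      push Not at this
      obtain ⟨c, ⟨h1, hcC⟩, hc0⟩ := this
      obtain ⟨v, hvV, w, hw, rfl⟩ := Submodule.mem_sup.1 h1
      obtain ⟨w, rfl⟩ := Ideal.mem_span_singleton'.1 hw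
      have h2 := hc _ hcC
      rw [add_mul, hv v hvV, zero_add, mul_assoc] at h2
      have h3 : v + w * u ∈ C ⊓ S := ⟨hcC, by rw [← h2]; exact S.mul_mem_left _ hsS⟩
      rw [hCS] at h3
      exact hc0 h3
  intro hsm
  have heC : e ∈ C := by rw [← hCe]; exact Ideal.subset_span rfl
  have h1 := hsm (Ideal.span {1 - e}) (by
    rw [Ideal.eq_top_iff_one]
    have h9 : (1 - e) + e ∈ Ideal.span {1 - e} ⊔ C :=
      Submodule.add_mem _ (Ideal.mem_sup_left (Ideal.subset_span rfl)) (Ideal.mem_sup_right heC)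
    rwa [sub_add_cancel] at h9)
  have h2 : e ∈ Ideal.span {1 - e} := by rw [h1]; trivial
  obtain ⟨w, hw⟩ := Ideal.mem_span_singleton'.1 h2
  have hee := hc e heC
  have : e = 0 := by
    calc e = w * (1 - e) * e := by rw [hw, hee]
      _ = 0 := by rw [mul_assoc, sub_mul, one_mul, hee, sub_self, mul_zero]
  apply h0
  rw [← hCe, this, Ideal.span_singleton_eq_bot]

theorem inj_of_noeth (hFP : IsLeftFPInjective R) (hn : IsNoetherianRing R) :
    Module.Injective R R := by
  apply Module.Baer.injective
  intro I g
  obtain ⟨n, t, ht⟩ := Submodule.fg_iff_exists_fin_generating_family.1 (IsNoetherian.noetherian I)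
  have htI : ∀ i, t i ∈ I := fun i => by rw [← ht]; exact Submodule.subset_span ⟨i, rfl⟩
  obtain ⟨c, hc⟩ := aux_FM hFP n t (fun i => g ⟨t i, htI i⟩) (by
    intro u hu
    have : ∑ i, u i * g ⟨t i, htI i⟩ = g (∑ i, u i • ⟨t i, htI i⟩) := by
      rw [map_sum]; exact Finset.sum_congr rfl (fun i _ => (map_smul g _ _).symm)
    rw [this]
    have h0 : (∑ i, u i • (⟨t i, htI i⟩ : I)) = 0 := by
      apply Subtype.ext
      simpa using hu
    rw [h0, map_zero])
  refine ⟨LinearMap.toSpanSingleton R R c, ?_⟩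
  intro x hx
  have : ∀ x ∈ Submodule.span R (Set.range t), ∀ hx : x ∈ I, x * c = g ⟨x, hx⟩ := by
    intro x hx
    induction hx using Submodule.span_induction with
    | mem y hy => obtain ⟨i, rfl⟩ := hy; intro _; exact (hc i).symm
    | zero =>
      intro h
      rw [zero_mul]; exact (map_zero g).symm
    | add a b ha hb iha ihb =>
      intro h
      rw [ht] at ha hb
      rw [add_mul, iha ha, ihb hb, ← map_add]; rfl
    | smul r a ha iha =>
      intro h
      rw [ht] at ha
      have h1 : r • a * c = r * (a * c) := mul_assoc _ _ _
      rw [h1, iha ha, ← smul_eq_mul, ← map_smul]; rfl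
  exact this x (by rw [ht]; exact hx) hx

/-- good idempotents -/
def GoodIdem (e : R) : Prop :=
  e * e = e ∧ e ≠ 0 ∧ ∀ a, e * a = a → a ∉ Ring.jacobson R → ∃ s, e = a * s

theorem exists_not_sing (hFP : IsLeftFPInjective R) {a : R} (ha : a ∉ Ring.jacobson R) :
    ∃ b, b ≠ 0 ∧ ∀ u, u * b * a = 0 → u * b = 0 := by
  by_contra hcon
  push Not at hcon
  apply ha
  apply jac_sing hFP
  intro b hb
  by_contra hb0
  obtain ⟨u, hu, hu'⟩ := hcon b hb0
  exact hu' (hb u hu)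

theorem inj_on_range [IsNoetherianRing Rᵐᵒᵖ] {w s : R} (hw : w = w * w * s) (y : R)
    (hy : w * (w * y) = 0) : w * y = 0 := by
  have := aux_noeth (R := R)
  have h1 : ∀ n : ℕ, ∀ y, ∃ y', w * y = w ^ (n + 1) * y' := by
    intro n
    induction n with
    | zero => intro y; exact ⟨y, by simp⟩
    | succ n ih =>
      intro y
      obtain ⟨y', hy'⟩ := ih (s * y)
      refine ⟨y', ?_⟩
      rw [pow_succ' w (n + 1), mul_assoc, ← hy', ← mul_assoc, ← mul_assoc, ← hw]
  let f : ℕ →o RIdeal R := ⟨fun n => rAnnI R {w ^ n}, by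
    apply monotone_nat_of_le_succ
    intro n t ht x hx
    have h : w ^ n * t = 0 := ht _ rfl
    rw [Set.mem_singleton_iff.1 hx, pow_succ', mul_assoc, h, mul_zero]⟩
  obtain ⟨n, hn⟩ := monotone_stabilizes_iff_noetherian.2 this f
  obtain ⟨y', hy'⟩ := h1 n y
  have h2 : y' ∈ f (n + 2) := by
    intro x hx
    rw [Set.mem_singleton_iff.1 hx, pow_succ', mul_assoc, ← hy', hy]
  rw [← hn (n + 2) (by omega), hn (n + 1) (by omega)] at h2
  rw [hy']
  exact h2 _ rfl

theorem hull [IsNoetherianRing Rᵐᵒᵖ] (hFP : IsLeftFPInjective R)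
    (H : ∀ C : Ideal R, IsComplementLeftIdeal R C → C ≠ ⊥ → ¬ IsSmallLeftIdeal R C)
    (x : R) (hx : x ≠ 0)
    (unif : ∀ u v, u * x ≠ 0 → v * x ≠ 0 → ∃ p q, p * (u * x) = q * (v * x) ∧ p * (u * x) ≠ 0) :
    ∃ g, GoodIdem g ∧ x * g = x := by
  obtain ⟨V, -, hVx, hVmax⟩ := exists_compl (Ideal.span {x}) ⊥ (bot_inf_eq _)
  obtain ⟨C, hxC, hCV, hCmax⟩ := exists_compl V (Ideal.span {x}) (by rw [inf_comm]; exact hVx)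
  have hxC : x ∈ C := hxC (Ideal.subset_span rfl)
  have hC0 : C ≠ ⊥ := by
    rintro rfl
    exact hx hxC
  have hns := H C ⟨V, hCV, hCmax⟩ hC0
  have : ¬ C ≤ Ring.jacobson R := fun h => hns (small_of_le_jac C h)
  obtain ⟨a, haC, haJ⟩ := SetLike.not_le_iff_exists.1 this
  have ess : ∀ c ∈ C, c ≠ 0 → ∃ p u, p * c = u * x ∧ p * c ≠ 0 := by
    intro c hc hc0
    by_contra hcon
    push Not at hcon
    have h1 : V ⊔ Ideal.span {c} = V := by
      apply hVmax _ le_sup_left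
      rw [eq_bot_iff]
      rintro z ⟨hz, hzx⟩
      obtain ⟨u, rfl⟩ := Ideal.mem_span_singleton'.1 hzx
      obtain ⟨v, hv, w, hw, hvw⟩ := Submodule.mem_sup.1 hz
      obtain ⟨p, rfl⟩ := Ideal.mem_span_singleton'.1 hw
      have h2 : v ∈ C ⊓ V := ⟨by
        rw [eq_sub_of_add_eq hvw]
        exact sub_mem (C.mul_mem_left _ hxC) (C.mul_mem_left _ hc), hv⟩
      rw [hCV] at h2
      have h3 : v = 0 := h2
      rw [h3, zero_add] at hvw
      have := hcon p u hvw
      rw [← hvw, this]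
      exact zero_mem _
    have h2 : c ∈ C ⊓ V := ⟨hc, by rw [← h1]; exact Ideal.mem_sup_right (Ideal.subset_span rfl)⟩
    rw [hCV] at h2
    exact hc0 h2
  have unifC : ∀ c ∈ C, ∀ d ∈ C, c ≠ 0 → d ≠ 0 → ∃ p q, p * c = q * d ∧ p * c ≠ 0 := by
    intro c hc d hd hc0 hd0
    obtain ⟨p, u, hpu, hp⟩ := ess c hc hc0
    obtain ⟨q, v, hqv, hq⟩ := ess d hd hd0
    obtain ⟨p', q', h1, h2⟩ := unif u v (hpu ▸ hp) (hqv ▸ hq)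
    refine ⟨p' * p, q' * q, ?_, ?_⟩
    · rw [mul_assoc, mul_assoc, hpu, hqv, h1]
    · rw [mul_assoc, hpu]; exact h2
  obtain ⟨b, hb0, hb⟩ := exists_not_sing hFP haJ
  obtain ⟨s, hs⟩ := aux_P hFP (b * a) b (by intro u hu; apply hb; rw [mul_assoc]; exact hu)
  have hba0 : b * a ≠ 0 := by
    intro h
    apply hb0
    rw [hs, h, zero_mul]
  obtain ⟨w, hwdef⟩ : ∃ w, w = s * a := ⟨_, rfl⟩
  have hwC : w ∈ C := by rw [hwdef]; exact C.mul_mem_left _ haC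
  have hbaw : b * a * w = b * a := by rw [hwdef, ← mul_assoc, ← hs]
  have hlw : ∀ d ∈ C, d * w = 0 → d = 0 := by
    intro d hd hdw
    by_contra hd0
    obtain ⟨p, q, h1, h2⟩ := unifC (b * a) (C.mul_mem_left _ haC) d hd hba0 hd0
    apply h2
    rw [← hbaw, ← mul_assoc p, h1, mul_assoc, hdw, mul_zero]
  obtain ⟨s', hs'⟩ := aux_P hFP (w * w) w (by
    intro u hu
    apply hlw _ (C.mul_mem_left _ hwC)
    rw [mul_assoc]; exact hu)
  have hreg : w * (s' * w) = w := by
    have h1 : w * (s' * w - 1) = 0 := by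
      apply inj_on_range hs'
      rw [mul_sub, mul_sub, mul_one, ← mul_assoc w s' w, ← mul_assoc w (w * s') w,
        ← mul_assoc w w s', ← hs', sub_self]
    rw [mul_sub, mul_one, sub_eq_zero] at h1
    exact h1
  obtain ⟨g, hgdef⟩ : ∃ g, g = s' * w := ⟨_, rfl⟩
  rw [← hgdef] at hreg
  have hgC : g ∈ C := by rw [hgdef]; exact C.mul_mem_left _ hwC
  have hgg : g * g = g := by
    nth_rewrite 1 [hgdef]
    rw [mul_assoc, hreg, hgdef]
  have hg0 : g ≠ 0 := by
    rintro h
    rw [h, mul_zero] at hreg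
    rw [← hreg, mul_zero] at hbaw
    exact hba0 hbaw.symm
  have hfix : ∀ c ∈ C, c * g = c := by
    intro c hc
    by_contra hne
    have hne' : c - c * g ≠ 0 := fun h => hne (sub_eq_zero.1 h).symm
    obtain ⟨p, q, h1, h2⟩ := unifC (c - c * g) (sub_mem hc (C.mul_mem_left _ hgC)) g hgC hne' hg0
    apply h2
    rw [h1, ← hgg, ← mul_assoc, ← h1, mul_assoc, sub_mul, mul_assoc c, hgg, sub_self, mul_zero]
  refine ⟨g, ⟨hgg, hg0, ?_⟩, hfix x hxC⟩
  intro a hga haJ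
  obtain ⟨b, hb0, hb⟩ := exists_not_sing hFP haJ
  have hbg : b * g ≠ 0 := by
    intro h
    apply hb0
    have := hb 1
    rw [one_mul] at this
    apply this
    rw [← hga, ← mul_assoc, h, zero_mul]
  apply aux_P hFP
  intro u hu
  by_contra hug
  obtain ⟨p, q, h1, h2⟩ := unifC (u * g) (C.mul_mem_left _ hgC) (b * g) (C.mul_mem_left _ hgC)
    hug hbg
  apply h2
  have h3 : q * b = 0 := by
    apply hb
    rw [← hga, ← mul_assoc, mul_assoc q b g, ← h1, mul_assoc, mul_assoc, hga, hu, mul_zero]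
  rw [h1, ← mul_assoc, h3, zero_mul]

theorem good_mem [IsNoetherianRing Rᵐᵒᵖ] (hFP : IsLeftFPInjective R)
    (H : ∀ C : Ideal R, IsComplementLeftIdeal R C → C ≠ ⊥ → ¬ IsSmallLeftIdeal R C)
    (M : RIdeal R) (hM : M ≠ ⊤) : ∃ g, GoodIdem g ∧ g ∉ M := by
  have := aux_noeth (R := R)
  obtain ⟨M', hM', hMM'⟩ := (eq_top_or_exists_le_coatom M).resolve_left hM
  have : ∃ x, (∀ t ∈ M', x * t = 0) ∧ x ≠ 0 := by
    by_contra hcon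
    push Not at hcon
    apply hM'.1
    rw [eq_top_iff]
    intro y _
    have : (1 : R) ∈ M' := aux_ann hFP M' 1 (by intro u hu; rw [hcon u hu, zero_mul])
    simpa using aux_rmem M' this y
  obtain ⟨x, hx, hx0⟩ := this
  have key : ∀ u, u * x ≠ 0 → ∀ t, u * x * t = 0 → x * t = 0 := by
    intro u hu t ht
    apply hx
    have h1 : M' ≤ rAnnI R {u * x} := by
      intro t ht z hz
      rw [Set.mem_singleton_iff.1 hz, mul_assoc, hx t ht, mul_zero]
    have h2 : rAnnI R {u * x} ≠ ⊤ := by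
      intro h
      have : (1 : R) ∈ rAnnI R {u * x} := by rw [h]; trivial
      have := this _ rfl
      rw [mul_one] at this
      exact hu this
    have h3 : rAnnI R {u * x} = M' := (hM'.le_iff.1 h1).resolve_left h2
    rw [← h3]
    intro z hz
    rw [Set.mem_singleton_iff.1 hz, ht]
  obtain ⟨g, hg, hxg⟩ := hull hFP H x hx0 (by
    intro u v hu hv
    by_contra hcon
    push Not at hcon
    obtain ⟨c, hc1, hc2⟩ := aux_disj hFP (u * x) (v * x) (fun p q h => hcon p q h)
    apply hu
    rw [← hc1, mul_assoc, key v hv c hc2, mul_zero])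
  refine ⟨g, hg, fun h => hx0 ?_⟩
  rw [← hxg]
  exact hx _ (hMM' h)

theorem GoodIdem.notMem {g : R} (hg : GoodIdem g) : g ∉ Ring.jacobson R := by
  intro h
  obtain ⟨s, -, hs⟩ := jac_unit h
  apply hg.2.1
  calc g = s * (1 - g) * g := by rw [hs, one_mul]
    _ = 0 := by rw [mul_assoc, sub_mul, one_mul, hg.1, sub_self, mul_zero]

theorem semisimp [IsNoetherianRing Rᵐᵒᵖ] (hFP : IsLeftFPInjective R)
    (H : ∀ C : Ideal R, IsComplementLeftIdeal R C → C ≠ ⊥ → ¬ IsSmallLeftIdeal R C) :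
    IsSemisimpleRing (R ⧸ Ring.jacobson R) := by
  rw [← isSemisimpleRing_mulOpposite_iff]
  apply IsSemisimpleModule.of_sSup_simples_eq_top
  set W := sSup {m : Submodule (R ⧸ Ring.jacobson R)ᵐᵒᵖ (R ⧸ Ring.jacobson R)ᵐᵒᵖ |
    IsSimpleModule (R ⧸ Ring.jacobson R)ᵐᵒᵖ m} with hW
  let π := Ideal.Quotient.mk (Ring.jacobson R)
  let M0 : RIdeal R :=
    { carrier := {r | MulOpposite.op (π r) ∈ W}
      add_mem' := by
        intro a b ha hb
        show MulOpposite.op (π (a + b)) ∈ W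
        rw [map_add, MulOpposite.op_add]
        exact W.add_mem ha hb
      zero_mem' := by
        show MulOpposite.op (π 0) ∈ W
        rw [map_zero, MulOpposite.op_zero]
        exact W.zero_mem
      smul_mem' := by
        intro c a ha
        show MulOpposite.op (π (a * c.unop)) ∈ W
        rw [map_mul, MulOpposite.op_mul]
        exact W.smul_mem _ ha }
  by_contra hne
  have hM0 : M0 ≠ ⊤ := by
    intro h
    apply hne
    rw [eq_top_iff]
    intro y _
    have h1 : (1 : R) ∈ M0 := by rw [h]; trivial
    have h2 : MulOpposite.op (π 1) ∈ W := h1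
    rw [map_one, MulOpposite.op_one] at h2
    have := W.smul_mem y h2
    rwa [smul_eq_mul, mul_one] at this
  obtain ⟨g, hg, hgM⟩ := good_mem hFP H M0 hM0
  apply hgM
  show MulOpposite.op (π g) ∈ W
  have hs : IsSimpleModule (R ⧸ Ring.jacobson R)ᵐᵒᵖ
      (Ideal.span {MulOpposite.op (π g)} : Ideal (R ⧸ Ring.jacobson R)ᵐᵒᵖ) := by
    rw [isSimpleModule_iff_isAtom]
    constructor
    · rw [Ne, Ideal.span_singleton_eq_bot, MulOpposite.op_eq_zero_iff]
      intro h
      exact hg.notMem (Ideal.Quotient.eq_zero_iff_mem.1 h)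
    · intro I hI
      by_contra hI0
      obtain ⟨q, hqI, hq0⟩ := Submodule.exists_mem_ne_zero_of_ne_bot hI0
      obtain ⟨p, hp⟩ := Ideal.mem_span_singleton'.1 (hI.le hqI)
      obtain ⟨p', hp'⟩ := Ideal.Quotient.mk_surjective p.unop
      have hq : q = MulOpposite.op (π (g * p')) := by
        rw [← hp, map_mul, MulOpposite.op_mul, hp', MulOpposite.op_unop]
      obtain ⟨s, hs⟩ := hg.2.2 (g * p') (by rw [← mul_assoc, hg.1]) (by
        intro h
        apply hq0
        rw [hq, MulOpposite.op_eq_zero_iff]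
        exact Ideal.Quotient.eq_zero_iff_mem.2 h)
      have : MulOpposite.op (π g) ∈ I := by
        have h1 : MulOpposite.op (π g) = MulOpposite.op (π s) * q := by
          rw [hq, ← MulOpposite.op_mul, ← map_mul, ← hs]
        rw [h1]
        exact I.smul_mem _ hqI
      apply hI.not_ge
      rw [Ideal.span_le]
      intro z hz
      rw [Set.mem_singleton_iff.1 hz]
      exact this
  exact (le_sSup hs : _ ≤ W) (Ideal.subset_span rfl)

theorem left_split (hss : IsSemisimpleRing (R ⧸ Ring.jacobson R)) (E : Ideal R) :
    ∃ c ∈ E, ∀ x ∈ E, x - x * c ∈ Ring.jacobson R := by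
  obtain ⟨e, he, hE⟩ := IsSemisimpleRing.ideal_eq_span_idempotent
    (E.map (Ideal.Quotient.mk (Ring.jacobson R)))
  have h1 : e ∈ E.map (Ideal.Quotient.mk (Ring.jacobson R)) := by
    rw [hE]; exact Ideal.subset_span rfl
  obtain ⟨c, hc, hce⟩ := (Ideal.mem_map_iff_of_surjective _ Ideal.Quotient.mk_surjective).1 h1
  refine ⟨c, hc, fun x hx => ?_⟩
  have h2 := Ideal.mem_map_of_mem (Ideal.Quotient.mk (Ring.jacobson R)) hx
  rw [hE] at h2
  obtain ⟨r, hr⟩ := Ideal.mem_span_singleton'.1 h2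
  rw [← Ideal.Quotient.eq_zero_iff_mem, map_sub, map_mul, hce, ← hr, mul_assoc, he.eq, sub_self]

theorem right_split (hss : IsSemisimpleRing (R ⧸ Ring.jacobson R)) (K : RIdeal R) :
    ∃ c ∈ K, ∀ x ∈ K, x - c * x ∈ Ring.jacobson R := by
  rw [← isSemisimpleRing_mulOpposite_iff] at hss
  let I : Ideal (R ⧸ Ring.jacobson R)ᵐᵒᵖ :=
    { carrier := {q | ∃ k ∈ K, q = MulOpposite.op (Ideal.Quotient.mk (Ring.jacobson R) k)}
      add_mem' := by
        rintro _ _ ⟨a, ha, rfl⟩ ⟨b, hb, rfl⟩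
        exact ⟨a + b, K.add_mem ha hb, by rw [map_add, MulOpposite.op_add]⟩
      zero_mem' := ⟨0, K.zero_mem, by rw [map_zero, MulOpposite.op_zero]⟩
      smul_mem' := by
        rintro p _ ⟨a, ha, rfl⟩
        obtain ⟨p', hp'⟩ := Ideal.Quotient.mk_surjective p.unop
        exact ⟨a * p', aux_rmem K ha p', by
          rw [map_mul, MulOpposite.op_mul, hp', MulOpposite.op_unop, smul_eq_mul]⟩ }
  obtain ⟨e, he, hE⟩ := IsSemisimpleRing.ideal_eq_span_idempotent I
  have h1 : e ∈ I := by
    rw [hE]; exact Ideal.subset_span rfl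
  obtain ⟨c, hc, hce⟩ := h1
  refine ⟨c, hc, fun x hx => ?_⟩
  have h2 : MulOpposite.op (Ideal.Quotient.mk (Ring.jacobson R) x) ∈ I := ⟨x, hx, rfl⟩
  rw [hE] at h2
  obtain ⟨r, hr⟩ := Ideal.mem_span_singleton'.1 h2
  rw [← Ideal.Quotient.eq_zero_iff_mem, ← MulOpposite.op_eq_zero_iff, map_sub, map_mul,
    MulOpposite.op_sub, MulOpposite.op_mul, ← hce, ← hr, mul_assoc, he.eq, sub_self]

theorem nilp [IsNoetherianRing Rᵐᵒᵖ] (hFP : IsLeftFPInjective R) :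
    ∃ n : ℕ, (Ring.jacobson R) ^ n = ⊥ := by
  have := aux_noeth (R := R)
  have hR : ∀ n : ℕ, ∀ x ∈ (Ring.jacobson R) ^ n, ∀ s, x * s ∈ (Ring.jacobson R) ^ n := by
    intro n x hx s
    exact Ideal.mul_mem_right s _ hx
  let Jr : ℕ → RIdeal R := fun n =>
    { carrier := {x | x ∈ (Ring.jacobson R) ^ n}
      add_mem' := fun ha hb => Submodule.add_mem _ ha hb
      zero_mem' := Submodule.zero_mem _
      smul_mem' := fun c x hx => hR n x hx c.unop }
  let f : ℕ →o RIdeal R := ⟨fun n =>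
    { carrier := {u | ∀ x ∈ (Ring.jacobson R) ^ n, u * x = 0}
      add_mem' := by
        intro a b ha hb x hx
        rw [add_mul, ha x hx, hb x hx, add_zero]
      zero_mem' := by intro x _; exact zero_mul x
      smul_mem' := by
        intro c a ha x hx
        show a * c.unop * x = 0
        rw [mul_assoc]
        exact ha _ (Ideal.mul_mem_left _ _ hx) }, by
    apply monotone_nat_of_le_succ
    intro n u hu x hx
    exact hu x (Ideal.pow_le_pow_right (Nat.le_succ n) hx)⟩
  obtain ⟨n, hn⟩ := monotone_stabilizes_iff_noetherian.2 this f
  refine ⟨n, ?_⟩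
  have heq : ∀ x ∈ (Ring.jacobson R) ^ n, x ∈ (Ring.jacobson R) ^ (n + 1) := by
    intro x hx
    apply aux_ann hFP (Jr (n + 1)) x
    intro u hu
    have h1 : u ∈ f (n + 1) := hu
    rw [← hn (n + 1) (by omega)] at h1
    exact h1 x hx
  by_contra hne
  have hlt : (⊥ : RIdeal R) < Jr n := by
    rw [bot_lt_iff_ne_bot]
    intro h
    apply hne
    rw [eq_bot_iff]
    intro x hx
    have : x ∈ Jr n := hx
    rw [h] at this
    exact this
  obtain ⟨K', (hK' : K' < Jr n), hmax⟩ := (wellFounded_gt (α := RIdeal R)).has_min {K | K < Jr n} ⟨⊥, hlt⟩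
  obtain ⟨k, hk, hkK⟩ := SetLike.exists_of_lt hK'
  have hsup : K' ⊔ Submodule.span Rᵐᵒᵖ {k} = Jr n := by
    by_contra h
    have h1 : K' ⊔ Submodule.span Rᵐᵒᵖ {k} ≤ Jr n := by
      apply sup_le hK'.le
      rw [Submodule.span_le]
      intro z hz
      rw [Set.mem_singleton_iff.1 hz]; exact hk
    apply hmax _ (lt_of_le_of_ne h1 h)
    apply lt_of_le_of_ne le_sup_left
    intro h2
    apply hkK
    rw [h2]
    exact Submodule.mem_sup_right (Submodule.subset_span rfl)
  have key : ∀ y ∈ (Ring.jacobson R) ^ (n + 1), ∃ j ∈ Ring.jacobson R, y - k * j ∈ K' := by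
    intro y hy
    rw [Submodule.pow_succ] at hy
    induction hy using Submodule.mul_induction_on' with
    | mem_mul_mem m hm j hj =>
      have h1 : m ∈ Jr n := hm
      rw [← hsup] at h1
      obtain ⟨k', hk', z, hz, rfl⟩ := Submodule.mem_sup.1 h1
      obtain ⟨r, rfl⟩ := Submodule.mem_span_singleton.1 hz
      refine ⟨r.unop * j, Ideal.mul_mem_left _ _ hj, ?_⟩
      have : (k' + r • k) * j - k * (r.unop * j) = k' * j := by
        show (k' + k * r.unop) * j - k * (r.unop * j) = k' * j
        noncomm_ring
      rw [this]
      exact aux_rmem K' hk' j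
    | add a _ b _ ha hb =>
      obtain ⟨j, hj, h1⟩ := ha
      obtain ⟨j', hj', h2⟩ := hb
      refine ⟨j + j', add_mem hj hj', ?_⟩
      have : a + b - k * (j + j') = (a - k * j) + (b - k * j') := by noncomm_ring
      rw [this]
      exact K'.add_mem h1 h2
  obtain ⟨j, hj, h1⟩ := key k (heq k hk)
  obtain ⟨s, hs, -⟩ := jac_unit hj
  apply hkK
  have h2 := aux_rmem K' h1 s
  have h3 : (k - k * j) * s = k := by
    have : (k - k * j) = k * (1 - j) := by noncomm_ring
    rw [this, mul_assoc, hs, mul_one]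
  rwa [h3] at h2

theorem ess_S (n : ℕ) : ∀ b : R, b ≠ 0 → (∀ x ∈ (Ring.jacobson R) ^ n, x * b = 0) →
    ∃ u, u * b ≠ 0 ∧ ∀ j ∈ Ring.jacobson R, j * (u * b) = 0 := by
  induction n with
  | zero =>
    intro b hb h
    exact absurd (by simpa using h 1 (Submodule.one_le.1 le_rfl)) hb
  | succ n ih =>
    intro b hb h
    by_cases h1 : ∀ j ∈ Ring.jacobson R, j * b = 0
    · exact ⟨1, by simpa using hb, by simpa using h1⟩
    · push Not at h1
      obtain ⟨j, hj, hjb⟩ := h1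
      obtain ⟨u, hu, hu'⟩ := ih (j * b) hjb (by
        intro x hx
        rw [← mul_assoc]
        apply h
        rw [Submodule.pow_succ]
        exact Ideal.mul_mem_mul hx hj)
      exact ⟨u * j, by rwa [mul_assoc], by rwa [mul_assoc]⟩

theorem ess_T (T : RIdeal R) (n : ℕ) : ∀ t : R, t ∉ T →
    (∀ x ∈ (Ring.jacobson R) ^ n, t * x ∈ T) →
    ∃ t', t' ∉ T ∧ ∀ j ∈ Ring.jacobson R, t' * j ∈ T := by
  induction n with
  | zero =>
    intro b hb h
    exact absurd (by simpa using h 1 (Submodule.one_le.1 le_rfl)) hb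
  | succ n ih =>
    intro b hb h
    by_cases h1 : ∀ j ∈ Ring.jacobson R, b * j ∈ T
    · exact ⟨b, hb, h1⟩
    · push Not at h1
      obtain ⟨j, hj, hjb⟩ := h1
      apply ih (b * j) hjb
      intro x hx
      rw [mul_assoc]
      apply h
      rw [Ideal.IsTwoSided.pow_succ]
      exact Ideal.mul_mem_mul hj hx

/-- membership in the right annihilator of the radical -/
def inS (s : R) : Prop := ∀ j ∈ Ring.jacobson R, j * s = 0

theorem inS.left {s : R} (h : inS s) (r : R) : inS (r * s) := by
  intro j hj
  rw [← mul_assoc]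
  exact h _ (Ideal.mul_mem_right _ _ hj)

theorem inS.right {s : R} (h : inS s) (r : R) : inS (s * r) := by
  intro j hj
  rw [← mul_assoc, h j hj, zero_mul]

theorem SJ (hFP : IsLeftFPInjective R) (hss : IsSemisimpleRing (R ⧸ Ring.jacobson R))
    {s j : R} (hs : inS s) (hj : j ∈ Ring.jacobson R) : s * j = 0 := by
  obtain ⟨c, hc, hcE⟩ := left_split hss (lAnnI R {s * j})
  have h0 : (1 - c) * s = 0 := by
    apply sing_jac hFP hj
    intro u hu
    have h1 : u * (1 - c) ∈ lAnnI R {s * j} := by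
      intro x hx
      rw [Set.mem_singleton_iff.1 hx, ← hu]
      noncomm_ring
    have h2 := hcE _ h1
    have h3 := hcE _ hc
    have h4 : u * (1 - c) ∈ Ring.jacobson R := by
      have : u * (1 - c) = (u * (1 - c) - u * (1 - c) * c) + u * (c - c * c) := by noncomm_ring
      rw [this]
      exact Submodule.add_mem _ h2 (Ideal.mul_mem_left _ _ h3)
    rw [← mul_assoc]
    exact hs _ h4
  rw [sub_mul, one_mul, sub_eq_zero] at h0
  rw [h0, mul_assoc]
  exact hc _ rfl

theorem rS [IsNoetherianRing Rᵐᵒᵖ] (hFP : IsLeftFPInjective R) {c : R}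
    (h : ∀ s, inS s → s * c = 0) : c ∈ Ring.jacobson R := by
  obtain ⟨n, hn⟩ := nilp hFP
  apply jac_sing hFP
  intro b hb
  by_contra hb0
  obtain ⟨u, hu, hu'⟩ := ess_S n b hb0 (by
    intro x hx
    rw [hn] at hx
    rw [(hx : x = 0), zero_mul])
  exact hu (hb u (h _ hu'))

/-- the operator used in the chain argument -/
def Psi (K : RIdeal R) : RIdeal R where
  carrier := {a | ∀ x, inS x → (∀ k ∈ K, x * k = 0) → a * x = 0}
  add_mem' := by
    intro a b ha hb x hx hk
    rw [add_mul, ha x hx hk, hb x hx hk, add_zero]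
  zero_mem' := by intro x _ _; exact zero_mul x
  smul_mem' := by
    intro c a ha x hx hk
    show a * c.unop * x = 0
    rw [mul_assoc]
    apply ha _ (hx.left _)
    intro k hkK
    rw [mul_assoc, hk k hkK, mul_zero]

theorem Psi_left (K : RIdeal R) (a : R) (ha : a ∈ Psi K) (r : R) : r * a ∈ Psi K := by
  intro x hx hk
  rw [mul_assoc, ha x hx hk, mul_zero]

theorem Psi_jac (K : RIdeal R) (a : R) (ha : a ∈ Ring.jacobson R) : a ∈ Psi K :=
  fun x hx _ => hx a ha

theorem Psi_inj [IsNoetherianRing Rᵐᵒᵖ] (hFP : IsLeftFPInjective R)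
    (hss : IsSemisimpleRing (R ⧸ Ring.jacobson R)) (K K' : RIdeal R)
    (hK : ∀ j ∈ Ring.jacobson R, j ∈ K) (hK' : ∀ a ∈ K', ∀ r : R, r * a ∈ K')
    (h : Psi K' ≤ Psi K) : K' ≤ K := by
  let X : RIdeal R :=
    { carrier := {x | inS x ∧ ∀ k ∈ K', x * k = 0}
      add_mem' := by
        rintro a b ⟨ha, ha'⟩ ⟨hb, hb'⟩
        refine ⟨fun j hj => ?_, fun k hk => ?_⟩
        · rw [mul_add, ha j hj, hb j hj, add_zero]
        · rw [add_mul, ha' k hk, hb' k hk, add_zero]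
      zero_mem' := ⟨fun j _ => mul_zero j, fun k _ => zero_mul k⟩
      smul_mem' := by
        rintro c a ⟨ha, ha'⟩
        refine ⟨ha.right _, fun k hk => ?_⟩
        show a * c.unop * k = 0
        rw [mul_assoc]
        exact ha' _ (hK' k hk _) }
  have hX : ∀ x, inS x → (∀ k ∈ K, x * k = 0) → ∀ k ∈ K', x * k = 0 := by
    intro x hx hxk
    have : x ∈ X := by
      apply aux_ann hFP
      intro u hu
      have h1 : u ∈ Psi K' := fun y hy hyk => hu y ⟨hy, hyk⟩
      exact h h1 x hx hxk
    exact this.2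
  obtain ⟨c, hc, hcK⟩ := right_split hss K
  intro a ha
  have h1 : (1 - c) * a ∈ Ring.jacobson R := by
    apply rS hFP
    intro s hs
    rw [← mul_assoc]
    apply hX _ (hs.right _) _ a ha
    intro k hk
    have : s * (1 - c) * k = s * (k - c * k) := by noncomm_ring
    rw [this]
    exact SJ hFP hss hs (hcK k hk)
  have h2 : a = (1 - c) * a + c * a := by noncomm_ring
  rw [h2]
  exact K.add_mem (hK _ h1) (aux_rmem K hc a)

theorem lS [IsNoetherianRing Rᵐᵒᵖ] (hFP : IsLeftFPInjective R)
    (hss : IsSemisimpleRing (R ⧸ Ring.jacobson R)) {c : R}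
    (h : ∀ s, inS s → c * s = 0) : c ∈ Ring.jacobson R := by
  have hN := aux_noeth (R := R)
  let K0 : RIdeal R :=
    { carrier := {x | x ∈ Ring.jacobson R}
      add_mem' := fun ha hb => Submodule.add_mem (Ring.jacobson R) ha hb
      zero_mem' := Submodule.zero_mem (Ring.jacobson R)
      smul_mem' := fun c x hx => by
        show x * c.unop ∈ Ring.jacobson R
        exact Ideal.mul_mem_right c.unop _ hx }
  let F : ℕ → RIdeal R := fun n => Psi^[n] K0
  have hF : ∀ n, F (n + 1) = Psi (F n) := fun n => Function.iterate_succ_apply' Psi n K0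
  have hJ : ∀ n, ∀ j ∈ Ring.jacobson R, j ∈ F n := by
    intro n
    cases n with
    | zero => exact fun j hj => hj
    | succ n => rw [hF]; exact Psi_jac _
  have hl : ∀ n, ∀ a ∈ F n, ∀ r : R, r * a ∈ F n := by
    intro n
    cases n with
    | zero => exact fun j hj r => Ideal.mul_mem_left (Ring.jacobson R) r hj
    | succ n => rw [hF]; exact Psi_left _
  have mono : ∀ n, F n ≤ F (n + 1) := by
    intro n
    induction n with
    | zero => exact fun j hj => hJ 1 j hj
    | succ n ih =>
      rw [hF n, hF (n + 1)]
      intro a ha x hx hk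
      exact ha x hx (fun k hkk => hk k (ih hkk))
  obtain ⟨n, hn⟩ := monotone_stabilizes_iff_noetherian.2 hN ⟨F, monotone_nat_of_le_succ mono⟩
  have down : ∀ n, F (n + 1) ≤ F n → F 1 ≤ F 0 := by
    intro n
    induction n with
    | zero => exact id
    | succ n ih =>
      intro h1
      apply ih
      rw [hF (n + 1)] at h1
      nth_rewrite 2 [hF n] at h1
      exact Psi_inj hFP hss _ _ (hJ n) (hl (n + 1)) h1
  have h1 := down n (le_of_eq (hn (n + 1) (by omega)).symm)
  have h2 : c ∈ F 1 := fun x hx _ => h x hx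
  exact h1 h2

theorem kasch [IsNoetherianRing Rᵐᵒᵖ] (hFP : IsLeftFPInjective R)
    (hss : IsSemisimpleRing (R ⧸ Ring.jacobson R)) (N : Ideal R) (hN : N.IsMaximal) :
    ∃ y, y ≠ 0 ∧ ∀ n ∈ N, n * y = 0 := by
  obtain ⟨c, hc, hcN⟩ := left_split hss N
  by_contra hcon
  push Not at hcon
  have h1 : 1 - c ∈ Ring.jacobson R := by
    apply lS hFP hss
    intro s hs
    by_contra h0
    obtain ⟨n, hn, hn'⟩ := hcon _ h0
    apply hn'
    have : n * ((1 - c) * s) = (n - n * c) * s := by noncomm_ring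
    rw [this]
    exact hs _ (hcN n hn)
  apply hN.ne_top
  rw [Ideal.eq_top_iff_one]
  have h2 := N.add_mem (Ring.jacobson_le_of_isMaximal N h1) hc
  rwa [sub_add_cancel] at h2

theorem Xe_noeth [IsNoetherianRing Rᵐᵒᵖ] (hFP : IsLeftFPInjective R)
    (hss : IsSemisimpleRing (R ⧸ Ring.jacobson R)) (e : R) (he : GoodIdem e) :
    IsNoetherian R (lAnnI R {t | e * t ∈ Ring.jacobson R}) := by
  set X := lAnnI R {t | e * t ∈ Ring.jacobson R} with hX
  have h1 : ∀ x ∈ X, x * e = x := by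
    intro x hx
    have := hx (1 - e) (by
      show e * (1 - e) ∈ Ring.jacobson R
      rw [mul_sub, mul_one, he.1, sub_self]; exact zero_mem _)
    rw [mul_sub, mul_one, sub_eq_zero] at this
    exact this.symm
  have h2 : ∀ x ∈ X, ∀ t, x * t = 0 → x ≠ 0 → e * t ∈ Ring.jacobson R := by
    intro x hx t hxt hx0
    by_contra hn
    obtain ⟨s, hs⟩ := he.2.2 (e * t) (by rw [← mul_assoc, he.1]) hn
    apply hx0
    rw [← h1 x hx, hs, ← mul_assoc, ← mul_assoc, h1 x hx, hxt, zero_mul]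
  have h3 : ∀ z ∈ X, ∀ u, u * z ≠ 0 → ∃ w, w * (u * z) = z := by
    intro z hz u huz
    have hz0 : z ≠ 0 := by rintro rfl; exact huz (mul_zero _)
    have hne : lAnnI R {z} ≠ ⊤ := by
      intro h
      have : (1 : R) ∈ lAnnI R {z} := by rw [h]; trivial
      have := this z rfl
      rw [one_mul] at this
      exact hz0 this
    obtain ⟨N, hN, hle⟩ := Ideal.exists_le_maximal _ hne
    obtain ⟨y, hy0, hy⟩ := kasch hFP hss N hN
    obtain ⟨c, hc⟩ := aux_P hFP z y (by
      intro u hu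
      apply hy
      apply hle
      intro x hx
      rw [Set.mem_singleton_iff.1 hx, hu])
    have hec : e * c ∉ Ring.jacobson R := by
      intro h
      exact hy0 (hc.trans (hz c h))
    obtain ⟨d, hd⟩ := he.2.2 (e * c) (by rw [← mul_assoc, he.1]) hec
    have hzy : z = y * d := by
      rw [hc]
      nth_rewrite 1 [← h1 z hz]
      nth_rewrite 1 [hd]
      rw [← mul_assoc, ← mul_assoc, h1 z hz]
    have hNz : ∀ n ∈ N, n * z = 0 := by
      intro n hn
      rw [hzy, ← mul_assoc, hy n hn, zero_mul]
    obtain ⟨w, i, hi, hwi⟩ := hN.exists_inv (x := u) (fun h => huz (hNz u h))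
    refine ⟨w, ?_⟩
    calc w * (u * z) = (w * u + i) * z := by rw [add_mul, hNz i hi, add_zero, mul_assoc]
      _ = z := by rw [hwi, one_mul]
  by_cases hX0 : X = ⊥
  · rw [hX0]; infer_instance
  have hs : IsSimpleModule R X := by
    rw [isSimpleModule_iff_isAtom]
    refine ⟨hX0, fun I hI => ?_⟩
    by_contra hI0
    obtain ⟨z, hzI, hz0⟩ := Submodule.exists_mem_ne_zero_of_ne_bot hI0
    have hzX := hI.le hzI
    apply hI.not_ge
    intro z' hz'
    by_cases hz'0 : z' = 0
    · rw [hz'0]; exact zero_mem _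
    have : ∃ p q, p * z = q * z' ∧ p * z ≠ 0 := by
      by_contra hcon
      push Not at hcon
      obtain ⟨c, hc1, hc2⟩ := aux_disj hFP z z' hcon
      apply hz0
      rw [← hc1]
      exact hzX c (h2 z' hz' c hc2 hz'0)
    obtain ⟨p, q, hpq, hp⟩ := this
    obtain ⟨w, hw⟩ := h3 z' hz' q (hpq ▸ hp)
    rw [← hw, ← hpq]
    exact I.smul_mem _ (I.smul_mem _ hzI)
  infer_instance

theorem left_noeth [IsNoetherianRing Rᵐᵒᵖ] (hFP : IsLeftFPInjective R)
    (H : ∀ C : Ideal R, IsComplementLeftIdeal R C → C ≠ ⊥ → ¬ IsSmallLeftIdeal R C) :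
    IsNoetherianRing R := by
  have hN := aux_noeth (R := R)
  have hss := semisimp hFP H
  obtain ⟨n, hn⟩ := nilp hFP
  have main : ∀ T : RIdeal R, IsNoetherian R (lAnnI R (T : Set R)) := by
    intro T
    induction T using (wellFounded_gt (α := RIdeal R)).induction with
    | _ T ih =>
    by_cases hT : T = ⊤
    · have : lAnnI R (T : Set R) = ⊥ := by
        rw [eq_bot_iff]
        intro x hx
        have := hx 1 (by rw [hT]; trivial)
        rwa [mul_one] at this
      rw [this]; infer_instance
    have h1T : (1 : R) ∉ T := by
      intro h
      apply hT
      rw [eq_top_iff]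
      intro y _
      simpa using aux_rmem T h y
    obtain ⟨t, htT, htJ⟩ := ess_T T n 1 h1T (by
      intro x hx
      rw [hn] at hx
      rw [(hx : x = 0), mul_zero]
      exact T.zero_mem)
    let M0 : RIdeal R :=
      { carrier := {r | t * r ∈ T}
        add_mem' := by
          intro a b ha hb
          show t * (a + b) ∈ T
          rw [mul_add]; exact T.add_mem ha hb
        zero_mem' := by
          show t * 0 ∈ T
          rw [mul_zero]; exact T.zero_mem
        smul_mem' := by
          intro c a ha
          show t * (a * c.unop) ∈ T
          rw [← mul_assoc]; exact aux_rmem T ha _ }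
    obtain ⟨e, he, heM⟩ := good_mem hFP H M0 (by
      intro h
      apply htT
      have : (1 : R) ∈ M0 := by rw [h]; trivial
      have : t * 1 ∈ T := this
      rwa [mul_one] at this)
    have heT : t * e ∉ T := heM
    have hlt : T < T ⊔ Submodule.span Rᵐᵒᵖ {t * e} := by
      apply lt_of_le_of_ne le_sup_left
      intro h
      apply heT
      rw [h]
      exact Submodule.mem_sup_right (Submodule.subset_span rfl)
    have i1 := ih _ hlt
    have i2 := Xe_noeth hFP hss e he
    have hle : lAnnI R ((T ⊔ Submodule.span Rᵐᵒᵖ {t * e} : RIdeal R) : Set R) ≤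
        lAnnI R (T : Set R) := fun x hx y hy => hx y (Submodule.mem_sup_left hy)
    refine isNoetherian_of_range_eq_ker (Submodule.inclusion hle)
      (LinearMap.codRestrict (lAnnI R {s | e * s ∈ Ring.jacobson R})
        ((LinearMap.toSpanSingleton R R (t * e)).comp (Submodule.subtype _)) ?_) ?_
    · rintro ⟨x, hx⟩ s hs
      show x * (t * e) * s = 0
      have h1 := hx _ (htJ _ hs)
      rw [← h1]; noncomm_ring
    · ext ⟨x, hx⟩
      rw [Submodule.range_inclusion, LinearMap.mem_ker, Submodule.mem_comap]
      have : (LinearMap.codRestrict (lAnnI R {s | e * s ∈ Ring.jacobson R})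
        ((LinearMap.toSpanSingleton R R (t * e)).comp (Submodule.subtype _)) (by
          rintro ⟨x, hx⟩ s hs
          show x * (t * e) * s = 0
          have h1 := hx _ (htJ _ hs)
          rw [← h1]; noncomm_ring) (⟨x, hx⟩ : lAnnI R (T : Set R)) = 0) ↔ x * (t * e) = 0 := by
        rw [Subtype.ext_iff]; rfl
      rw [this]
      constructor
      · intro h
        exact h _ (Submodule.mem_sup_right (Submodule.subset_span rfl))
      · intro h y hy
        obtain ⟨a, ha, b, hb, rfl⟩ := Submodule.mem_sup.1 hy
        obtain ⟨r, rfl⟩ := Submodule.mem_span_singleton.1 hb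
        show x * (a + t * e * r.unop) = 0
        rw [mul_add, hx a ha, zero_add, ← mul_assoc, h, zero_mul]
  have h := main ⊥
  have htop : lAnnI R ((⊥ : RIdeal R) : Set R) = ⊤ := by
    rw [eq_top_iff]
    intro x _ y hy
    rw [(hy : y = 0), mul_zero]
  rw [htop] at h
  exact isNoetherian_of_linearEquiv (Submodule.topEquiv (R := R) (M := R))

end Helpers

/-- For right noetherian left FP-injective rings, QF iff every nonzero complement
left ideal is not small. -/
theorem stmt8 (R : Type*) [Ring R] [IsNoetherianRing Rᵐᵒᵖ] (hFP : IsLeftFPInjective R) :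
    IsQuasiFrobenius R ↔
      ∀ C : Ideal R, IsComplementLeftIdeal R C → C ≠ ⊥ → ¬ IsSmallLeftIdeal R C := by
  constructor
  · exact fun hQ C hC h0 => qf_dir hQ C hC h0
  · intro H
    have hn := left_noeth hFP H
    exact ⟨hn, inj_of_noeth hFP hn⟩
end
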